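/- arXiv:math/9701224 — 2 statements merged into one kernel-verified Lean document; each statement's English description precedes it below -/
import Mathlib

section
/- Let J = {−2, −1, 0, 1, 2} and let X be a VRRW on J started at 0. Fix a closed interval [c, d] ⊆ (0,1) and 0 < ε ≤ min{c, 1−d, d−c}/10. Then with positive probability there exists an integer N_0 such that for all n ≥ N_0: c ≤ 2 Z(n,1)/n ≤ d, Z(n,2) < n^{1−ε}, and Z(n,−2) < n^{1−ε}. -/
/-!
Write `a = Z(2)`, `b = Z(-2)`, `w = Z(1)`, `T = Z(1) + Z(-1)` and `p = w / T`. The clock `T` is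
deterministic (about `n / 2`), and so is `Z(0) + a + b`, which differs from `T` by at most `2`.
While `a + b` is small compared with `T`, the fraction `p` behaves like the fraction of a Pólya
urn, and `a`, `b` grow like `T ^ p` and `T ^ (1 - p)`. This is turned into a single potential

  `A (a + b + h) T ^ (-θ) + B ((p - q) ^ 2 + 1 / T)`,

where `q` is the midpoint of `[c, d]`, `1 / √B` is a quarter of its length, `θ = 1 - 2 ε`, and the
correction `h` depends on the position: a constant `κ` at `±2`, `ρ a / T` at `1`, `ρ b / T` at `-1`,
and `0` at `0`. It pays for the drift of `p` when the walk sits at `±2` and for the next increment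
of `a` or `b` when it sits at `±1`. If the potential is below `1`, then `|p - q| < 1 / √B` and
`A (a + b) < T ^ θ`, and under these bounds the potential decreases in conditional mean at every
step (`PotParams.core_centre`, `PotParams.core_mid`, `PotParams.core_end`). Hence the potential
capped at `1` is a bounded supermartingale on the whole space
(`IsVRRWOn.supermartingale_cap`), and it converges almost surely.

With positive probability the walk makes `m` round trips to `1` and `l` round trips to `-1` before
ever visiting `±2` (`IsVRRWOn.start_pos`), and for suitable `m`, `l` the potential is then below `1`
(`PotParams.exists_start`). Were the limit equal to `1` almost surely, the supermartingale
inequality on this event would fail, so with positive probability the limit is below `1`. On that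
event the potential is eventually below `1`, which gives the three claimed bounds.
-/

open MeasureTheory Filter Set

/-- Augmented occupation number: one plus the number of visits of `X` to `w` up through
time `n`. -/
noncomputable def occ {Ω : Type*} (X : ℕ → Ω → ℤ) (n : ℕ) (w : ℤ) (ω : Ω) : ℝ :=
  1 + ((Finset.range (n + 1)).filter (fun i => X i ω = w)).card

open scoped Classical in
/-- Vertex-reinforced random walk on a set `J ⊆ ℤ` started at `v ∈ J`: the walk stays in
`J` and moves to a neighbor `x ∈ J` with conditional probability proportional to the
augmented occupation number of `x`. -/
def IsVRRWOn {Ω : Type*} {mΩ : MeasurableSpace Ω} (μ : Measure Ω)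
    (ℱ : Filtration ℕ mΩ) (J : Set ℤ) (v : ℤ) (X : ℕ → Ω → ℤ) : Prop :=
  Adapted ℱ X ∧ (∀ ω, X 0 ω = v) ∧ (∀ n ω, X n ω ∈ J) ∧
    ∀ n x, (μ[fun ω => if X (n + 1) ω = x then (1 : ℝ) else 0 | ℱ n]) =ᵐ[μ]
      fun ω => if x ∈ J ∧ |x - X n ω| = 1 then
        occ X n x ω /
          ((if X n ω - 1 ∈ J then occ X n (X n ω - 1) ω else 0) +
           (if X n ω + 1 ∈ J then occ X n (X n ω + 1) ω else 0)) else 0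

/-! ### The potential -/

/-- Constants of the potential, with the inequalities that make it decrease in mean while it is
below `1`: `q` and `B` are the centre and the weight of the quadratic term, `A` and `θ` the weight
and the exponent of the term controlling the visits to `±2`, `κ` and `ρ` the position-dependent
corrections at `±2` and at `±1`, and `m` a bound for both `p` and `1 - p` in the controlled
region. -/
structure PotParams where
  q : ℝ
  B : ℝ
  A : ℝ
  θ : ℝ
  κ : ℝ
  ρ : ℝ
  m : ℝ
  q_nonneg : 0 ≤ q
  q_le_one : q ≤ 1
  B_pos : 0 < B
  A_one : 1 ≤ A
  θ_pos : 0 < θ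
  θ_le_one : θ ≤ 1
  κ_nonneg : 0 ≤ κ
  ρ_nonneg : 0 ≤ ρ
  region : ∀ p, B * (p - q) ^ 2 < 1 → p ≤ m ∧ 1 - p ≤ m
  ρm_le : ρ * m ≤ θ
  κ_le : 1 + κ ≤ ρ * (1 - 1 / A)
  κ_ge : ρ + 2 * B ≤ A * κ

namespace PotParams
variable (P : PotParams)

/-- The potential as a function of real variables: `s` is the sum of the occupation numbers of `±2`,
`h` the position-dependent correction, `w` the occupation number of `1`, and `T` the sum of the
occupation numbers of `±1`. -/
noncomputable def core (s h w T : ℝ) : ℝ :=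
  P.A * (s + h) * T ^ (-P.θ) + P.B * ((w / T - P.q) ^ 2 + 1 / T)

/-- Bernoulli's inequality, as the decrease of the weight `T ^ (-θ)` in one tick of the clock. -/
lemma rpow_succ_le {T θ : ℝ} (hT : 0 < T) (h0 : 0 ≤ θ) (h1 : θ ≤ 1) :
    (T + 1) ^ (-θ) ≤ T ^ (-θ) * (1 - θ / (T + 1)) := by
  have hb := rpow_one_add_le_one_add_mul_self (s := -(1 / (T + 1))) (p := θ)
    (by rw [neg_le_neg_iff, div_le_one (by positivity)]; linarith) h0 h1
  have e : 1 + -(1 / (T + 1)) = T / (T + 1) := by field_simp; ring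
  rw [e, Real.div_rpow hT.le (by positivity)] at hb
  rw [Real.rpow_neg hT.le, Real.rpow_neg (by positivity)]
  have hTp : 0 < T ^ θ := by positivity
  have hT1 : 0 < (T + 1) ^ θ := by positivity
  rw [inv_mul_eq_div, le_div_iff₀ hTp, inv_mul_eq_div]
  refine hb.trans (le_of_eq ?_)
  ring

lemma rpow_inv_le {T θ : ℝ} (hT : 1 ≤ T) (h1 : θ ≤ 1) : 1 / (T + 1) ≤ T ^ (-θ) := by
  calc 1 / (T + 1) ≤ 1 / T := by
        apply one_div_le_one_div_of_le <;> linarith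
    _ = T ^ (-1 : ℝ) := by rw [Real.rpow_neg_one, one_div]
    _ ≤ T ^ (-θ) := Real.rpow_le_rpow_of_exponent_le hT (by linarith)

lemma core_lt_one {s h w T : ℝ} (hT : 1 ≤ T) (hs : 0 ≤ s) (hh : 0 ≤ h)
    (H : P.core s h w T < 1) :
    P.B * (w / T - P.q) ^ 2 < 1 ∧ P.A * s < T ^ P.θ ∧ P.A * s < T := by
  have hA := P.A_one
  have hB := P.B_pos
  have hT0 : 0 < T := by linarith
  have h1 : 0 < T ^ (-P.θ) := by positivity
  have h2 : 0 ≤ P.A * s * T ^ (-P.θ) := by positivity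
  have h2' : 0 ≤ P.A * h * T ^ (-P.θ) := by positivity
  have h3 : 0 ≤ P.B * (w / T - P.q) ^ 2 := by positivity
  have h4 : 0 < P.B * (1 / T) := by positivity
  unfold core at H
  have h5 : P.A * s * T ^ (-P.θ) < 1 := by nlinarith
  have h6 : P.A * s < T ^ P.θ := by
    rw [Real.rpow_neg hT0.le, ← div_eq_mul_inv, div_lt_one (by positivity)] at h5
    exact h5
  refine ⟨by nlinarith, h6, h6.trans_le ?_⟩
  calc T ^ P.θ ≤ T ^ (1 : ℝ) := Real.rpow_le_rpow_of_exponent_le hT P.θ_le_one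
    _ = T := Real.rpow_one T

/-- Mean decrease of the potential when the walk is at `0`. The variance of the urn fraction is at
most the decrease of `1 / T`, and the growth of the `±2` counts is at rate at most `ρ m ≤ θ`. -/
lemma core_centre {a b w v T : ℝ} (hT : 1 ≤ T) (ha : 0 ≤ a) (hb : 0 ≤ b)
    (hw : 0 ≤ w) (hv : 0 ≤ v) (hTe : T = w + v) (H : P.core (a + b) 0 w T < 1) :
    w / T * P.core (a + b) (P.ρ * a / (T + 1)) (w + 1) (T + 1) +
      v / T * P.core (a + b) (P.ρ * b / (T + 1)) w (T + 1) ≤ P.core (a + b) 0 w T := by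
  have hA := P.A_one
  have hB := P.B_pos
  have hT0 : 0 < T := by linarith
  obtain ⟨hr, -, -⟩ := P.core_lt_one hT (add_nonneg ha hb) le_rfl H
  obtain ⟨hp1, hp2⟩ := P.region _ hr
  have hvT : v / T = 1 - w / T := by field_simp; linarith
  have hρ := P.ρ_nonneg
  have hp0 : 0 ≤ w / T := by positivity
  have hp0' : 0 ≤ 1 - w / T := by rw [← hvT]; positivity
  have hw' : w = (w / T) * T := by field_simp
  rw [hvT]
  unfold core
  generalize w / T = p at *
  subst hw'
  have hquad : p * ((p * T + 1) / (T + 1) - P.q) ^ 2 + (1 - p) * (p * T / (T + 1) - P.q) ^ 2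
      + 1 / (T + 1) ≤ (p - P.q) ^ 2 + 1 / T := by
    have e : (p - P.q) ^ 2 + 1 / T - (p * ((p * T + 1) / (T + 1) - P.q) ^ 2
      + (1 - p) * (p * T / (T + 1) - P.q) ^ 2 + 1 / (T + 1)) =
       1 / (T * (T + 1)) - p * (1 - p) / (T + 1) ^ 2 := by
      field_simp
      ring
    have h1 : p * (1 - p) / (T + 1) ^ 2 ≤ 1 / (T * (T + 1)) := by
      rw [div_le_div_iff₀ (by positivity) (by positivity)]
      have : p * (1 - p) ≤ 1 := by nlinarith
      have h3 : T * (T + 1) ≤ (T + 1) ^ 2 := by nlinarith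
      have : 0 < T * (T + 1) := by positivity
      nlinarith
    linarith
  have hcount : p * (a + b + P.ρ * a / (T + 1)) + (1 - p) * (a + b + P.ρ * b / (T + 1))
      ≤ (a + b) * (1 + P.θ / (T + 1)) := by
    have h1 : P.ρ * (p * a + (1 - p) * b) ≤ P.θ * (a + b) := by
      have : P.ρ * (p * a + (1 - p) * b) ≤ P.ρ * (P.m * (a + b)) := by
        apply mul_le_mul_of_nonneg_left _ hρ
        nlinarith
      nlinarith [P.ρm_le]
    have h2 := div_le_div_of_nonneg_right h1 (show 0 ≤ T + 1 by positivity)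
    have e1 : p * (a + b + P.ρ * a / (T + 1)) + (1 - p) * (a + b + P.ρ * b / (T + 1)) =
      (a + b) + P.ρ * (p * a + (1 - p) * b) / (T + 1) := by field_simp; ring
    have e2 : (a + b) * (1 + P.θ / (T + 1)) = (a + b) + P.θ * (a + b) / (T + 1) := by ring
    linarith
  have hpow := rpow_succ_le hT0 P.θ_pos.le P.θ_le_one
  have hu : 0 < T ^ (-P.θ) := by positivity
  have hu1 : 0 < (T + 1) ^ (-P.θ) := by positivity
  have hθ := P.θ_pos
  have hmain : (p * (a + b + P.ρ * a / (T + 1)) + (1 - p) * (a + b + P.ρ * b / (T + 1)))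
      * (T + 1) ^ (-P.θ) ≤ (a + b) * T ^ (-P.θ) := by
    have ht : 0 ≤ P.θ / (T + 1) := by positivity
    generalize P.θ / (T + 1) = t at *
    calc _ ≤ (a + b) * (1 + t) * (T ^ (-P.θ) * (1 - t)) := by gcongr
      _ = (a + b) * T ^ (-P.θ) * (1 - t ^ 2) := by ring
      _ ≤ (a + b) * T ^ (-P.θ) * 1 := by
        gcongr
        nlinarith
      _ = _ := by ring
  have h1 := mul_le_mul_of_nonneg_left hmain (show 0 ≤ P.A by linarith)
  have h2 := mul_le_mul_of_nonneg_left hquad hB.le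
  linarith

/-- Mean decrease of the potential when the walk is at `1` (and, exchanging `a` and `b`, at `-1`);
here `z` is the occupation number of `0`. -/
lemma core_mid {a b z w T : ℝ} (hT : 1 ≤ T) (ha : 0 ≤ a) (hb : 0 ≤ b) (hz : 0 < z)
    (hS : z + a + b = T + 1) (H : P.core (a + b) (P.ρ * a / T) w T < 1) :
    z / (z + a) * P.core (a + b) 0 w T + a / (z + a) * P.core (a + b + 1) P.κ w T ≤
      P.core (a + b) (P.ρ * a / T) w T := by
  have hA := P.A_one
  have hρ := P.ρ_nonneg
  have hT0 : 0 < T := by linarith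
  obtain ⟨-, -, hs⟩ := P.core_lt_one hT (add_nonneg ha hb) (by positivity) H
  have hza : 0 < z + a := by linarith
  have hb' : b ≤ T / P.A := by
    rw [le_div_iff₀ (by linarith)]; nlinarith
  have hk : (1 + P.κ) * T ≤ P.ρ * (z + a) := by
    have h1 := mul_le_mul_of_nonneg_right P.κ_le hT0.le
    have h2 : P.ρ * (T - T / P.A) ≤ P.ρ * (z + a) := by
      apply mul_le_mul_of_nonneg_left _ hρ
      linarith
    have e : P.ρ * (1 - 1 / P.A) * T = P.ρ * (T - T / P.A) := by ring
    linarith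
  have hk2 : (1 + P.κ) * (a / (z + a)) ≤ P.ρ * a / T := by
    rw [← mul_div_assoc, div_le_div_iff₀ hza hT0]
    nlinarith
  have hz1 : z / (z + a) = 1 - a / (z + a) := by field_simp; ring
  unfold core
  rw [hz1]
  have hu : 0 < T ^ (-P.θ) := by positivity
  have h3 : P.A * T ^ (-P.θ) * ((1 + P.κ) * (a / (z + a))) ≤ P.A * T ^ (-P.θ) * (P.ρ * a / T) := by
    gcongr
  linarith

/-- Decrease of the potential when the walk is at `±2` and is forced back: losing `κ` pays for the
displacement of the urn fraction. -/
lemma core_end {a s w w' T : ℝ} (hT : 1 ≤ T) (ha : 0 ≤ a) (has : a ≤ s) (hw : 0 ≤ w)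
    (hwT : w ≤ T) (hw' : w' = w ∨ w' = w + 1) (H : P.core s P.κ w T < 1) :
    P.core s (P.ρ * a / (T + 1)) w' (T + 1) ≤ P.core s P.κ w T := by
  have hA := P.A_one
  have hB := P.B_pos
  have hρ := P.ρ_nonneg
  have hT0 : 0 < T := by linarith
  obtain ⟨-, -, hs⟩ := P.core_lt_one hT (ha.trans has) P.κ_nonneg H
  have hq0 := P.q_nonneg
  have hq1 := P.q_le_one
  have hp0 : 0 ≤ w / T := by positivity
  have hp1 : w / T ≤ 1 := by rw [div_le_one hT0]; exact hwT
  have hw2 : w = (w / T) * T := by field_simp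
  unfold core
  generalize w / T = p at *
  subst hw2
  have hquad : (w' / (T + 1) - P.q) ^ 2 + 1 / (T + 1) ≤ (p - P.q) ^ 2 + 1 / T + 2 / (T + 1) := by
    obtain ⟨j, hj0, hj1, hj⟩ : ∃ j : ℝ, -1 ≤ j ∧ j ≤ 1 ∧ w' / (T + 1) = p + j * (1 / (T + 1)) := by
      rcases hw' with h | h
      · refine ⟨-p, by linarith, by linarith, ?_⟩
        subst h; field_simp; ring
      · refine ⟨1 - p, by linarith, by linarith, ?_⟩
        subst h; field_simp; ring
    rw [hj]
    have e1 : 1 / T - 1 / (T + 1) = 1 / T * (1 / (T + 1)) := by field_simp; ring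
    have e2 : 1 / (T + 1) ≤ 1 / T := one_div_le_one_div_of_le hT0 (by linarith)
    have e3 : 2 / (T + 1) = 2 * (1 / (T + 1)) := by ring
    rw [e3]
    have ht : 0 < 1 / (T + 1) := by positivity
    generalize 1 / (T + 1) = t at *
    generalize 1 / T = t' at *
    have h1 : j * (p - P.q) ≤ 1 := by
      have hb : |j * (p - P.q)| ≤ 1 := by
        rw [abs_mul]
        exact mul_le_one₀ (abs_le.2 ⟨hj0, hj1⟩) (abs_nonneg _)
          (abs_le.2 ⟨by linarith, by linarith⟩)
      exact (abs_le.1 hb).2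
    have h2 : j ^ 2 ≤ 1 := by nlinarith
    have h3 : j ^ 2 * t ^ 2 ≤ t ^ 2 := by nlinarith [sq_nonneg t]
    nlinarith
  have hpow : (T + 1) ^ (-P.θ) ≤ T ^ (-P.θ) :=
    Real.rpow_le_rpow_of_nonpos hT0 (by linarith) (by linarith [P.θ_pos])
  have hinv := rpow_inv_le hT P.θ_le_one
  have hu1 : 0 < (T + 1) ^ (-P.θ) := by positivity
  have hu : 0 < T ^ (-P.θ) := by positivity
  have ha' : P.A * (P.ρ * a / (T + 1)) ≤ P.ρ := by
    rw [← mul_div_assoc, div_le_iff₀ (by positivity)]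
    have h : P.A * a ≤ T + 1 := by nlinarith
    nlinarith
  have hs0 : 0 ≤ s := ha.trans has
  have h1 : P.A * (s + P.ρ * a / (T + 1)) * (T + 1) ^ (-P.θ) ≤ (P.A * s + P.ρ) * T ^ (-P.θ) := by
    have : 0 ≤ P.A * s := by positivity
    apply mul_le_mul _ hpow hu1.le (by positivity)
    linarith
  have h2 : P.B * (2 / (T + 1)) ≤ 2 * P.B * T ^ (-P.θ) := by
    have := mul_le_mul_of_nonneg_left hinv (show 0 ≤ 2 * P.B by positivity)
    calc _ = 2 * P.B * (1 / (T + 1)) := by ring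
      _ ≤ _ := this
  have h3 := mul_le_mul_of_nonneg_right P.κ_ge hu.le
  have h4 := mul_le_mul_of_nonneg_left hquad hB.le
  linarith

end PotParams

/-! ### One step of the walk -/

/-- The occupation numbers `z` after one more visit to `y`. -/
def bump (z : ℤ → ℝ) (y : ℤ) : ℤ → ℝ := fun w => z w + if y = w then 1 else 0

open scoped Classical in
/-- Probability that the walk on `{-2, …, 2}` moves from `x` to `y` when the occupation numbers are
`z`. -/
noncomputable def stepProb (x : ℤ) (z : ℤ → ℝ) (y : ℤ) : ℝ :=
  if y ∈ Set.Icc (-2 : ℤ) 2 ∧ |y - x| = 1 then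
    z y / ((if x - 1 ∈ Set.Icc (-2 : ℤ) 2 then z (x - 1) else 0) +
      (if x + 1 ∈ Set.Icc (-2 : ℤ) 2 then z (x + 1) else 0)) else 0

/-- The relations between position and occupation numbers that hold along almost every path: even
and odd sites are visited alternately, starting from an even one. -/
structure Consistent (x : ℤ) (z : ℤ → ℝ) : Prop where
  one_le : ∀ w, 1 ≤ z w
  clock : ((x = 0 ∨ x = 2 ∨ x = -2) ∧ z 0 + z 2 + z (-2) = z 1 + z (-1) + 2) ∨
    ((x = 1 ∨ x = -1) ∧ z 0 + z 2 + z (-2) = z 1 + z (-1) + 1)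

namespace PotParams
variable (P : PotParams)

/-- The position-dependent correction in the potential. -/
noncomputable def hold (x : ℤ) (z : ℤ → ℝ) : ℝ :=
  if x = 2 ∨ x = -2 then P.κ
  else if x = 1 then P.ρ * z 2 / (z 1 + z (-1))
  else if x = -1 then P.ρ * z (-2) / (z 1 + z (-1))
  else 0

/-- The potential of the walk at `x` with occupation numbers `z`. -/
noncomputable def pot (x : ℤ) (z : ℤ → ℝ) : ℝ :=
  P.core (z 2 + z (-2)) (P.hold x z) (z 1) (z 1 + z (-1))

lemma hold_nonneg {x : ℤ} {z : ℤ → ℝ} (hz : ∀ w, 0 ≤ z w) : 0 ≤ P.hold x z := by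
  have h1 := hz 1
  have h2 := hz (-1)
  have h3 := hz 2
  have h4 := hz (-2)
  have hρ := P.ρ_nonneg
  have hκ := P.κ_nonneg
  unfold hold
  split_ifs <;> positivity

lemma pot_nonneg {x : ℤ} {z : ℤ → ℝ} (hz : ∀ w, 0 ≤ z w) : 0 ≤ P.pot x z := by
  have h1 := hz 1
  have h2 := hz (-1)
  have h3 := hz 2
  have h4 := hz (-2)
  have h5 := P.hold_nonneg (x := x) hz
  have hA := P.A_one
  have hB := P.B_pos
  unfold pot core
  positivity

lemma sum_sites (f : ℤ → ℝ) : ∑ y ∈ Finset.Icc (-2 : ℤ) 2, f y =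
    f (-2) + f (-1) + f 0 + f 1 + f 2 := by
  have : Finset.Icc (-2 : ℤ) 2 = {-2, -1, 0, 1, 2} := by decide
  rw [this]
  simp
  ring

lemma stepProb_nonneg {x y : ℤ} {z : ℤ → ℝ} (hz : ∀ w, 0 ≤ z w) : 0 ≤ stepProb x z y := by
  unfold stepProb
  split_ifs <;> first | exact le_rfl | (have := hz y; have := hz (x - 1); have := hz (x + 1); positivity)

lemma sum_stepProb {x : ℤ} {z : ℤ → ℝ} (h : Consistent x z) :
    ∑ y ∈ Finset.Icc (-2 : ℤ) 2, stepProb x z y = 1 := by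
  have h0 := h.one_le 0
  have h1 := h.one_le 1
  have h2 := h.one_le 2
  have h3 := h.one_le (-1)
  have h4 := h.one_le (-2)
  rw [sum_sites]
  rcases h.clock with ⟨rfl | rfl | rfl, -⟩ | ⟨rfl | rfl, -⟩ <;> norm_num [stepProb] <;>
    first | linarith | (rw [← add_div]; exact div_self (by linarith))

lemma sum_stepProb_pot_le {x : ℤ} {z : ℤ → ℝ} (h : Consistent x z) (hlt : P.pot x z < 1) :
    ∑ y ∈ Finset.Icc (-2 : ℤ) 2, stepProb x z y * P.pot y (bump z y) ≤ P.pot x z := by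
  have h0 := h.one_le 0
  have h1 := h.one_le 1
  have h2 := h.one_le 2
  have h3 := h.one_le (-1)
  have h4 := h.one_le (-2)
  have e1 : z 1 + (z (-1) + 1) = z 1 + z (-1) + 1 := by ring
  have e2 : z 1 + 1 + z (-1) = z 1 + z (-1) + 1 := by ring
  have e3 : z 2 + 1 + z (-2) = z 2 + z (-2) + 1 := by ring
  have e4 : z 2 + (z (-2) + 1) = z (-2) + z 2 + 1 := by ring
  rw [sum_sites]
  unfold pot hold at *
  rcases h.clock with ⟨rfl | rfl | rfl, hc⟩ | ⟨rfl | rfl, hc⟩ <;>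
    norm_num [stepProb, bump] at hlt ⊢
  · have := P.core_centre (by linarith) (by linarith) (by linarith) (by linarith)
      (by linarith) rfl hlt
    rw [e1, e2, add_comm (z (-1)), add_comm (_ * _)]
    exact this
  · have := P.core_end (a := z 2) (by linarith) (by linarith) (by linarith) (by linarith)
      (by linarith) (.inr rfl) hlt
    rw [div_self (by linarith), one_mul, e2]
    exact this
  · have := P.core_end (a := z (-2)) (by linarith) (by linarith) (by linarith) (by linarith)
      (by linarith) (.inl rfl) hlt
    rw [div_self (by linarith), one_mul, e1]
    exact this
  · have := P.core_mid (z := z 0) (by linarith) (by linarith) (by linarith) (by linarith)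
      (by linarith) hlt
    rw [e3]
    exact this
  · rw [add_comm (z 2)] at hlt
    have := P.core_mid (z := z 0) (by linarith) (by linarith) (by linarith) (by linarith)
      (by linarith) hlt
    rw [e4, add_comm (z (-2)) (z 0), add_comm (_ * _), add_comm (z 2)]
    exact this

/-- The potential capped at `1`. The cap makes it a supermartingale without any stopping, since only
the mean decrease below level `1` is needed. -/
noncomputable def cap (x : ℤ) (z : ℤ → ℝ) : ℝ := min (P.pot x z) 1

lemma sum_stepProb_cap_le {x : ℤ} {z : ℤ → ℝ} (h : Consistent x z) :
    ∑ y ∈ Finset.Icc (-2 : ℤ) 2, stepProb x z y * P.cap y (bump z y) ≤ P.cap x z := by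
  have hp : ∀ y, 0 ≤ stepProb x z y := fun y =>
    stepProb_nonneg fun w => zero_le_one.trans (h.one_le w)
  have hle1 : ∑ y ∈ Finset.Icc (-2 : ℤ) 2, stepProb x z y * P.cap y (bump z y) ≤ 1 := by
    rw [← sum_stepProb h]
    exact Finset.sum_le_sum fun y _ => mul_le_of_le_one_right (hp y) (min_le_right _ _)
  rcases lt_or_ge (P.pot x z) 1 with hlt | hge
  · refine le_min ?_ hle1
    refine le_trans (Finset.sum_le_sum fun y _ => ?_) (P.sum_stepProb_pot_le h hlt)
    exact mul_le_mul_of_nonneg_left (min_le_left _ _) (hp y)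
  · rwa [cap, min_eq_right hge]

lemma measurable_pot (y : ℤ) : Measurable (P.pot y) := by
  unfold pot core hold
  split_ifs <;> fun_prop

end PotParams

/-! ### Occupation numbers along the walk -/

lemma occ_succ {Ω : Type*} (X : ℕ → Ω → ℤ) (n : ℕ) (ω : Ω) :
    (fun w => occ X (n + 1) w ω) = bump (fun w => occ X n w ω) (X (n + 1) ω) := by
  funext w
  unfold occ bump
  rw [Finset.range_add_one (n := n + 1), Finset.filter_insert]
  split_ifs with h
  · rw [Finset.card_insert_of_notMem (by simp)]
    push_cast
    ring
  · ring

lemma occ_one_le {Ω : Type*} (X : ℕ → Ω → ℤ) (n : ℕ) (w : ℤ) (ω : Ω) : 1 ≤ occ X n w ω := by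
  unfold occ
  have : (0 : ℝ) ≤ (((Finset.range (n + 1)).filter (fun i => X i ω = w)).card : ℝ) := by positivity
  linarith

lemma occ_zero {Ω : Type*} (X : ℕ → Ω → ℤ) (w : ℤ) (ω : Ω) :
    occ X 0 w ω = 1 + if X 0 ω = w then 1 else 0 := by
  unfold occ
  simp only [zero_add, Finset.range_one, Finset.filter_singleton]
  split_ifs <;> simp

namespace IsVRRWOn

variable {Ω : Type*} {mΩ : MeasurableSpace Ω} {μ : Measure Ω} {ℱ : Filtration ℕ mΩ} {X : ℕ → Ω → ℤ}

lemma measurable_X (hX : IsVRRWOn μ ℱ (Set.Icc (-2) 2) 0 X) {i n : ℕ} (h : i ≤ n) :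
    Measurable[ℱ n] (X i) := (hX.1 i).mono (ℱ.mono h) le_rfl

lemma measurable_occ (hX : IsVRRWOn μ ℱ (Set.Icc (-2) 2) 0 X) {n : ℕ} :
    Measurable[ℱ n] (fun ω => fun w => occ X n w ω) := by
  refine (@measurable_pi_iff _ _ _ (ℱ n) _ _).2 fun w => ?_
  unfold occ
  have : (fun ω => (1 : ℝ) + (((Finset.range (n + 1)).filter (fun i => X i ω = w)).card : ℝ)) =
      fun ω => 1 + ∑ i ∈ Finset.range (n + 1), if X i ω = w then (1 : ℝ) else 0 := by
    funext ω; simp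
  rw [this]
  apply Measurable.const_add
  apply Finset.measurable_sum
  intro i hi
  refine Measurable.ite ?_ measurable_const measurable_const
  exact hX.measurable_X (Nat.lt_succ_iff.1 (Finset.mem_range.1 hi)) (measurableSet_singleton w)

lemma condExp_step (hX : IsVRRWOn μ ℱ (Set.Icc (-2) 2) 0 X) (n : ℕ) (y : ℤ) :
    (μ[fun ω => if X (n + 1) ω = y then (1 : ℝ) else 0 | ℱ n]) =ᵐ[μ]
      fun ω => stepProb (X n ω) (fun w => occ X n w ω) y := by
  convert hX.2.2.2 n y using 1
  funext ω
  unfold stepProb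
  congr

/-- Along a nearest-neighbour path, the positions have the parity of the time, and the total
occupation of the odd and of the even sites is deterministic. -/
lemma clock (hX : IsVRRWOn μ ℱ (Set.Icc (-2) 2) 0 X) {ω : Ω}
    (hω : ∀ n, |X (n + 1) ω - X n ω| = 1) (k : ℕ) :
    ((X (2 * k) ω = 0 ∨ X (2 * k) ω = 2 ∨ X (2 * k) ω = -2) ∧
      occ X (2 * k) 1 ω + occ X (2 * k) (-1) ω = k + 2 ∧
      occ X (2 * k) 0 ω + occ X (2 * k) 2 ω + occ X (2 * k) (-2) ω = k + 4) ∧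
    ((X (2 * k + 1) ω = 1 ∨ X (2 * k + 1) ω = -1) ∧
      occ X (2 * k + 1) 1 ω + occ X (2 * k + 1) (-1) ω = k + 3 ∧
      occ X (2 * k + 1) 0 ω + occ X (2 * k + 1) 2 ω + occ X (2 * k + 1) (-2) ω = k + 4) := by
  have hodd : ∀ k : ℕ, ((X (2 * k) ω = 0 ∨ X (2 * k) ω = 2 ∨ X (2 * k) ω = -2) ∧
      occ X (2 * k) 1 ω + occ X (2 * k) (-1) ω = k + 2 ∧
      occ X (2 * k) 0 ω + occ X (2 * k) 2 ω + occ X (2 * k) (-2) ω = k + 4) →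
    ((X (2 * k + 1) ω = 1 ∨ X (2 * k + 1) ω = -1) ∧
      occ X (2 * k + 1) 1 ω + occ X (2 * k + 1) (-1) ω = k + 3 ∧
      occ X (2 * k + 1) 0 ω + occ X (2 * k + 1) 2 ω + occ X (2 * k + 1) (-2) ω = k + 4) := by
    rintro k ⟨h1, h2, h3⟩
    have ha := hω (2 * k)
    have hJ := hX.2.2.1 (2 * k + 1) ω
    have hx : X (2 * k + 1) ω = 1 ∨ X (2 * k + 1) ω = -1 := by
      rw [abs_eq zero_le_one] at ha
      have := hJ.1
      have := hJ.2
      omega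
    have e := fun w => congrFun (occ_succ X (2 * k) ω) w
    simp only [bump] at e
    refine ⟨hx, ?_, ?_⟩ <;> simp only [e] <;> rcases hx with h | h <;> norm_num [h] <;> linarith
  have heven : (X (2 * k) ω = 0 ∨ X (2 * k) ω = 2 ∨ X (2 * k) ω = -2) ∧
      occ X (2 * k) 1 ω + occ X (2 * k) (-1) ω = k + 2 ∧
      occ X (2 * k) 0 ω + occ X (2 * k) 2 ω + occ X (2 * k) (-2) ω = k + 4 := by
    induction k with
    | zero => norm_num [occ_zero, hX.2.1 ω]
    | succ k ih =>
      obtain ⟨h1, h2, h3⟩ := hodd k ih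
      have ha := hω (2 * k + 1)
      have hJ := hX.2.2.1 (2 * k + 1 + 1) ω
      have hx : X (2 * k + 1 + 1) ω = 0 ∨ X (2 * k + 1 + 1) ω = 2 ∨ X (2 * k + 1 + 1) ω = -2 := by
        rw [abs_eq zero_le_one] at ha
        have := hJ.1
        have := hJ.2
        omega
      have e := fun w => congrFun (occ_succ X (2 * k + 1) ω) w
      simp only [bump] at e
      rw [show 2 * (k + 1) = 2 * k + 1 + 1 by ring]
      refine ⟨hx, ?_, ?_⟩ <;> simp only [e] <;> rcases hx with h | h | h <;> norm_num [h] <;>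
        linarith
  exact ⟨heven, hodd k heven⟩

lemma consistent (hX : IsVRRWOn μ ℱ (Set.Icc (-2) 2) 0 X) {ω : Ω}
    (hω : ∀ n, |X (n + 1) ω - X n ω| = 1) (n : ℕ) :
    Consistent (X n ω) (fun w => occ X n w ω) := by
  refine ⟨fun w => occ_one_le X n w ω, ?_⟩
  rcases Nat.even_or_odd' n with ⟨k, rfl | rfl⟩
  · obtain ⟨h1, h2, h3⟩ := (hX.clock hω k).1
    exact .inl ⟨h1, by linarith⟩
  · obtain ⟨h1, h2, h3⟩ := (hX.clock hω k).2
    exact .inr ⟨h1, by linarith⟩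

lemma clock_bounds (hX : IsVRRWOn μ ℱ (Set.Icc (-2) 2) 0 X) {ω : Ω}
    (hω : ∀ n, |X (n + 1) ω - X n ω| = 1) (n : ℕ) :
    (n : ℝ) / 2 ≤ occ X n 1 ω + occ X n (-1) ω ∧
      occ X n 1 ω + occ X n (-1) ω ≤ (n : ℝ) / 2 + 5 / 2 := by
  rcases Nat.even_or_odd' n with ⟨k, rfl | rfl⟩
  · obtain ⟨h1, h2, h3⟩ := (hX.clock hω k).1
    rw [h2]; push_cast; constructor <;> linarith
  · obtain ⟨h1, h2, h3⟩ := (hX.clock hω k).2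
    rw [h2]; push_cast; constructor <;> linarith

/-! ### Positive probabilities and the supermartingale -/

variable [IsProbabilityMeasure μ]

lemma integrable_ind (hX : IsVRRWOn μ ℱ (Set.Icc (-2) 2) 0 X) (n : ℕ) (y : ℤ) :
    Integrable (fun ω => if X n ω = y then (1 : ℝ) else 0) μ := by
  refine Integrable.of_bound (C := 1) ?_ (ae_of_all _ fun ω => by split_ifs <;> simp)
  refine (Measurable.ite ?_ measurable_const measurable_const).aestronglyMeasurable
  exact ((hX.measurable_X le_rfl).mono (ℱ.le n) le_rfl) (measurableSet_singleton y)

lemma setIntegral_step (hX : IsVRRWOn μ ℱ (Set.Icc (-2) 2) 0 X) {n : ℕ} {E : Set Ω}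
    (hE : MeasurableSet[ℱ n] E) (y : ℤ) :
    μ.real (E ∩ {ω | X (n + 1) ω = y}) =
      ∫ ω in E, stepProb (X n ω) (fun w => occ X n w ω) y ∂μ := by
  rw [← integral_congr_ae (ae_restrict_of_ae (hX.condExp_step n y)),
    setIntegral_condExp (ℱ.le n) (hX.integrable_ind (n + 1) y) hE]
  have hm : MeasurableSet {ω | X (n + 1) ω = y} :=
    ((hX.measurable_X le_rfl).mono (ℱ.le (n + 1)) le_rfl) (measurableSet_singleton y)
  have : (fun ω => if X (n + 1) ω = y then (1 : ℝ) else 0) =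
      Set.indicator {ω | X (n + 1) ω = y} (fun _ => (1 : ℝ)) := by
    funext ω; simp [Set.indicator]
  rw [this, setIntegral_indicator hm]
  simp

lemma step_pos (hX : IsVRRWOn μ ℱ (Set.Icc (-2) 2) 0 X) {n : ℕ} {E : Set Ω}
    (hE : MeasurableSet[ℱ n] E) (hpos : 0 < μ E) (y : ℤ)
    (hy : ∀ ω ∈ E, y ∈ Set.Icc (-2 : ℤ) 2 ∧ |y - X n ω| = 1) :
    0 < μ (E ∩ {ω | X (n + 1) ω = y}) := by
  have hE' := ℱ.le n _ hE
  have h0 : ∀ ω w, 0 ≤ occ X n w ω := fun ω w => zero_le_one.trans (occ_one_le X n w ω)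
  have hint : Integrable (fun ω => stepProb (X n ω) (fun w => occ X n w ω) y) μ :=
    integrable_condExp.congr (hX.condExp_step n y)
  have : 0 < μ.real (E ∩ {ω | X (n + 1) ω = y}) := by
    rw [hX.setIntegral_step hE, setIntegral_pos_iff_support_of_nonneg_ae
      (ae_of_all _ fun ω => PotParams.stepProb_nonneg (h0 ω)) hint.integrableOn]
    refine hpos.trans_le (measure_mono fun ω hω => ⟨?_, hω⟩)
    rw [Function.mem_support, stepProb, if_pos (hy ω hω)]
    have h1 := occ_one_le X n y ω
    have h2 := h0 ω (X n ω - 1)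
    have h3 := h0 ω (X n ω + 1)
    apply ne_of_gt
    apply div_pos (by linarith)
    obtain ⟨hyJ, hd⟩ := hy ω hω
    rcases (abs_eq zero_le_one).1 hd with h | h
    · have e : X n ω + 1 = y := by omega
      rw [e, if_pos hyJ]
      split_ifs <;> linarith
    · have e : X n ω - 1 = y := by omega
      rw [e, if_pos hyJ]
      split_ifs <;> linarith
  exact (ENNReal.toReal_pos_iff.1 this).1

lemma ae_adjacent (hX : IsVRRWOn μ ℱ (Set.Icc (-2) 2) 0 X) :
    ∀ᵐ ω ∂μ, ∀ n, |X (n + 1) ω - X n ω| = 1 := by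
  rw [ae_all_iff]
  intro n
  have key : ∀ y : ℤ, ∀ᵐ ω ∂μ, ¬ (|y - X n ω| ≠ 1 ∧ X (n + 1) ω = y) := by
    intro y
    have hE : MeasurableSet[ℱ n] {ω | |y - X n ω| ≠ 1} :=
      (hX.measurable_X le_rfl) (MeasurableSet.of_discrete (s := {x : ℤ | |y - x| ≠ 1}))
    have h := hX.setIntegral_step hE y
    rw [setIntegral_congr_fun (g := fun _ => (0 : ℝ)) (ℱ.le n _ hE)
      (fun ω hω => by rw [stepProb, if_neg fun h => hω h.2]), integral_zero] at h
    rw [measureReal_eq_zero_iff] at h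
    rw [ae_iff]
    simp only [not_not]
    exact h
  filter_upwards [ae_all_iff.2 key] with ω hω
  by_contra hne
  exact hω (X (n + 1) ω) ⟨hne, rfl⟩

/-- With positive probability the walk makes `m` round trips to `1` and `l` round trips to `-1` in
its first `2 (m + l)` steps. -/
lemma start_pos (hX : IsVRRWOn μ ℱ (Set.Icc (-2) 2) 0 X) (m l : ℕ) :
    0 < μ {ω | X (2 * (m + l)) ω = 0 ∧ occ X (2 * (m + l)) 1 ω = 1 + m ∧
      occ X (2 * (m + l)) (-1) ω = 1 + l ∧ occ X (2 * (m + l)) 2 ω = 1 ∧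
      occ X (2 * (m + l)) (-2) ω = 1} := by
  have hmeas : ∀ (n : ℕ) (u v : ℝ), MeasurableSet[ℱ n] {ω | X n ω = 0 ∧ occ X n 1 ω = u ∧
      occ X n (-1) ω = v ∧ occ X n 2 ω = 1 ∧ occ X n (-2) ω = 1} := by
    intro n u v
    have ho : ∀ w r, MeasurableSet[ℱ n] {ω | occ X n w ω = r} := fun w r =>
      ((measurable_pi_apply w).comp hX.measurable_occ) (measurableSet_singleton r)
    exact MeasurableSet.inter ((hX.measurable_X le_rfl) (measurableSet_singleton 0))
      ((ho _ _).inter ((ho _ _).inter ((ho _ _).inter (ho _ _))))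
  have two : ∀ (n : ℕ) (u v : ℝ) (y : ℤ), (y = 1 ∨ y = -1) →
      0 < μ {ω | X n ω = 0 ∧ occ X n 1 ω = u ∧
        occ X n (-1) ω = v ∧ occ X n 2 ω = 1 ∧ occ X n (-2) ω = 1} →
      0 < μ {ω | X (n + 1 + 1) ω = 0 ∧ occ X (n + 1 + 1) 1 ω = u + (if y = 1 then 1 else 0) ∧
        occ X (n + 1 + 1) (-1) ω = v + (if y = -1 then 1 else 0) ∧
        occ X (n + 1 + 1) 2 ω = 1 ∧ occ X (n + 1 + 1) (-2) ω = 1} := by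
    intro n u v y hy hpos
    have h1 := hX.step_pos (hmeas n u v) hpos y (by
      rintro ω ⟨h, -⟩
      rw [h]
      rcases hy with rfl | rfl <;> norm_num)
    have h2 := hX.step_pos (n := n + 1) ((ℱ.mono n.le_succ _ (hmeas n u v)).inter
      ((hX.measurable_X le_rfl) (measurableSet_singleton y))) h1 0 (by
      rintro ω ⟨-, h⟩
      have h : X (n + 1) ω = y := h
      rw [h]
      rcases hy with rfl | rfl <;> norm_num)
    refine h2.trans_le (measure_mono ?_)
    rintro ω ⟨⟨⟨a1, a2, a3, a4, a5⟩, (a6 : X (n + 1) ω = y)⟩, (a7 : X (n + 1 + 1) ω = 0)⟩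
    have e := fun w => congrFun (occ_succ X n ω) w
    have e' := fun w => congrFun (occ_succ X (n + 1) ω) w
    simp only [bump] at e e'
    rcases hy with rfl | rfl <;> simp [*]
  induction m with
  | zero =>
    induction l with
    | zero =>
      have : {ω | X (2 * (0 + 0)) ω = 0 ∧ occ X (2 * (0 + 0)) 1 ω = 1 + (0 : ℕ) ∧
          occ X (2 * (0 + 0)) (-1) ω = 1 + (0 : ℕ) ∧ occ X (2 * (0 + 0)) 2 ω = 1 ∧
          occ X (2 * (0 + 0)) (-2) ω = 1} = Set.univ := by
        ext ω
        simp [occ_zero, hX.2.1 ω]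
      rw [this]
      simp
    | succ l ih =>
      have := two _ _ _ (-1) (.inr rfl) ih
      rw [show 2 * (0 + (l + 1)) = 2 * (0 + l) + 1 + 1 by ring]
      simpa [add_assoc] using this
  | succ m ih =>
    have := two _ _ _ 1 (.inl rfl) ih
    rw [show 2 * (m + 1 + l) = 2 * (m + l) + 1 + 1 by ring]
    simpa [add_assoc] using this

lemma supermartingale_cap (hX : IsVRRWOn μ ℱ (Set.Icc (-2) 2) 0 X) (P : PotParams) :
    Supermartingale (fun n ω => P.cap (X n ω) (fun w => occ X n w ω)) ℱ μ := by
  have hcap : ∀ y, Measurable (P.cap y) := fun y => (P.measurable_pot y).min measurable_const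
  have hbd : ∀ (x : ℤ) (z : ℤ → ℝ), (∀ w, 0 ≤ z w) → ‖P.cap x z‖ ≤ 1 := by
    intro x z hz
    rw [PotParams.cap, Real.norm_of_nonneg (le_min (P.pot_nonneg hz) zero_le_one)]
    exact min_le_right _ _
  have hocc : ∀ n ω w, 0 ≤ occ X n w ω := fun n ω w => zero_le_one.trans (occ_one_le X n w ω)
  have hmeas : ∀ n, Measurable[ℱ n] (fun ω => P.cap (X n ω) (fun w => occ X n w ω)) := by
    intro n
    have h : Measurable (Function.uncurry P.cap) := measurable_from_prod_countable_right hcap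
    exact h.comp ((hX.measurable_X le_rfl).prodMk hX.measurable_occ)
  refine supermartingale_nat (fun n => (hmeas n).stronglyMeasurable) (fun n => ?_) (fun n => ?_)
  · exact Integrable.of_bound ((hmeas n).mono (ℱ.le n) le_rfl).aestronglyMeasurable 1
      (ae_of_all _ fun ω => hbd _ _ (hocc n ω))
  -- Split according to the site reached at time `n + 1`; the coefficients are `ℱ n`-measurable.
  have hsplit : (fun ω => P.cap (X (n + 1) ω) (fun w => occ X (n + 1) w ω)) =
      ∑ y ∈ Finset.Icc (-2 : ℤ) 2, (fun ω => P.cap y (bump (fun w => occ X n w ω) y)) *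
        (fun ω => if X (n + 1) ω = y then (1 : ℝ) else 0) := by
    funext ω
    have hJ := hX.2.2.1 (n + 1) ω
    rw [occ_succ]
    simp [Finset.sum_apply, hJ.1, hJ.2]
  have hbump : ∀ y, Measurable (fun z : ℤ → ℝ => bump z y) := by
    intro y
    unfold bump
    fun_prop
  have hm : ∀ y, StronglyMeasurable[ℱ n] (fun ω => P.cap y (bump (fun w => occ X n w ω) y)) :=
    fun y => (((hcap y).comp (hbump y)).comp hX.measurable_occ).stronglyMeasurable
  have hb : ∀ y ω, ‖P.cap y (bump (fun w => occ X n w ω) y)‖ ≤ 1 := by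
    intro y ω
    apply hbd
    intro w
    have := hocc n ω w
    unfold bump
    split_ifs <;> linarith
  have hpull : ∀ y, μ[(fun ω => P.cap y (bump (fun w => occ X n w ω) y)) *
        (fun ω => if X (n + 1) ω = y then (1 : ℝ) else 0) | ℱ n] =ᵐ[μ]
      fun ω => stepProb (X n ω) (fun w => occ X n w ω) y *
        P.cap y (bump (fun w => occ X n w ω) y) := by
    intro y
    filter_upwards [condExp_stronglyMeasurable_mul_of_bound (ℱ.le n) (hm y)
      (hX.integrable_ind (n + 1) y) 1 (ae_of_all _ (hb y)), hX.condExp_step n y] with ω h1 h2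
    rw [h1, Pi.mul_apply, h2, mul_comm]
  rw [hsplit]
  have hsum := condExp_finsetSum (μ := μ) (s := Finset.Icc (-2 : ℤ) 2)
    (f := fun y => (fun ω => P.cap y (bump (fun w => occ X n w ω) y)) *
        (fun ω => if X (n + 1) ω = y then (1 : ℝ) else 0))
    (fun y _ => (hX.integrable_ind (n + 1) y).bdd_mul
      ((hm y).mono (ℱ.le n)).aestronglyMeasurable (ae_of_all _ (hb y))) (ℱ n)
  filter_upwards [hsum, ae_all_iff.2 hpull, hX.ae_adjacent] with ω h1 h2 h3
  rw [h1, Finset.sum_apply]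
  simp only [h2]
  exact P.sum_stepProb_cap_le (hX.consistent h3 n)

end IsVRRWOn

/-! ### Choice of constants and conclusion -/

namespace PotParams

/-- Constants adapted to `[c, d]` and `ε`: the quadratic term is below `1` exactly when `p` lies
within `(d - c) / 4` of the midpoint, and then `p` and `1 - p` are at most `1 - 10 ε`, which leaves
room for the growth rate `ρ (1 - 10 ε) ≤ 1 - 2 ε = θ`. -/
noncomputable def ofInterval (c d ε : ℝ) (hc : 0 < c) (hcd : c < d) (hd : d < 1) (hε : 0 < ε)
    (h1 : 10 * ε ≤ c) (h2 : 10 * ε ≤ 1 - d) : PotParams where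
  q := (c + d) / 2
  B := 1 / ((d - c) / 4) ^ 2
  A := (2 + 2 * (1 / ((d - c) / 4) ^ 2)) / ε
  θ := 1 - 2 * ε
  κ := ε
  ρ := 1 + 8 * ε
  m := 1 - 10 * ε
  q_nonneg := by linarith
  q_le_one := by linarith
  B_pos := by
    have : 0 < d - c := by linarith
    positivity
  A_one := by
    have : 0 ≤ 1 / ((d - c) / 4) ^ 2 := by positivity
    rw [le_div_iff₀ hε]
    linarith
  θ_pos := by linarith
  θ_le_one := by linarith
  κ_nonneg := hε.le
  ρ_nonneg := by linarith
  region := by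
    intro p hp
    have hδ : 0 < (d - c) / 4 := by linarith
    rw [one_div, inv_mul_lt_iff₀ (by positivity), mul_one] at hp
    have := abs_lt_of_sq_lt_sq hp hδ.le
    rw [abs_lt] at this
    constructor <;> linarith
  ρm_le := by nlinarith
  κ_le := by
    have hB : 0 ≤ 1 / ((d - c) / 4) ^ 2 := by positivity
    have hA : 1 / ((2 + 2 * (1 / ((d - c) / 4) ^ 2)) / ε) ≤ ε := by
      rw [one_div_div, div_le_iff₀ (by linarith)]
      nlinarith
    nlinarith
  κ_ge := by
    have hB : 0 ≤ 1 / ((d - c) / 4) ^ 2 := by positivity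
    rw [div_mul_cancel₀ _ hε.ne']
    linarith

/-- With no visit to `±2`, and `m = ⌊q K⌋` of `K = m + l` round trips going to `1`, the potential
tends to `0` as `K` grows, hence is below `1` for some `m`, `l`. -/
lemma exists_start (P : PotParams) : ∃ m l : ℕ,
    P.core (1 + 1) 0 (1 + m) (1 + m + (1 + l)) < 1 := by
  have hA := P.A_one
  have hB := P.B_pos
  have hq0 := P.q_nonneg
  have hq1 := P.q_le_one
  have hlim : Tendsto (fun K : ℕ => P.A * (1 + 1 + 0) * ((K : ℝ) + 2) ^ (-P.θ) +
      5 * P.B * ((K : ℝ) + 2)⁻¹) atTop (nhds (P.A * (1 + 1 + 0) * 0 + 5 * P.B * 0)) := by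
    have hK : Tendsto (fun K : ℕ => (K : ℝ) + 2) atTop atTop :=
      tendsto_atTop_add_const_right _ _ tendsto_natCast_atTop_atTop
    exact (((tendsto_rpow_neg_atTop P.θ_pos).comp hK).const_mul _).add
      ((tendsto_inv_atTop_zero.comp hK).const_mul _)
  obtain ⟨K, hK⟩ := (hlim.eventually (gt_mem_nhds (show
    P.A * (1 + 1 + 0) * 0 + 5 * P.B * 0 < 1 by norm_num))).exists
  have hqK : 0 ≤ P.q * K := by positivity
  have hm1 := Nat.floor_le hqK
  have hm2 := Nat.lt_floor_add_one (P.q * K)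
  have hmK : ⌊P.q * K⌋₊ ≤ K := by
    have : (⌊P.q * K⌋₊ : ℝ) ≤ K := hm1.trans (mul_le_of_le_one_left (by positivity) hq1)
    exact_mod_cast this
  refine ⟨⌊P.q * K⌋₊, K - ⌊P.q * K⌋₊, ?_⟩
  rw [Nat.cast_sub hmK]
  generalize (⌊P.q * K⌋₊ : ℝ) = m at *
  rw [show 1 + m + (1 + ((K : ℝ) - m)) = K + 2 by ring]
  refine lt_of_le_of_lt ?_ hK
  unfold core
  have hT : (0 : ℝ) < K + 2 := by positivity
  have hT2 : (2 : ℝ) ≤ K + 2 := by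
    have : (0 : ℝ) ≤ K := by positivity
    linarith
  have hd : ((1 + m) / ((K : ℝ) + 2) - P.q) ^ 2 ≤ 4 * ((K : ℝ) + 2)⁻¹ := by
    have e : (1 + m) / ((K : ℝ) + 2) - P.q = (1 + m - P.q * K - 2 * P.q) / (K + 2) := by
      field_simp; ring
    have hn : (1 + m - P.q * K - 2 * P.q) ^ 2 ≤ 4 := by nlinarith
    rw [e, div_pow, div_le_iff₀ (by positivity)]
    have : 4 * ((K : ℝ) + 2)⁻¹ * (K + 2) ^ 2 = 4 * (K + 2) := by field_simp
    rw [this]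
    linarith
  have := mul_le_mul_of_nonneg_left hd hB.le
  rw [one_div]
  linarith

end PotParams

/-- **Step 2 of Theorem 3**: For VRRW on `J = {−2, −1, 0, 1, 2}` started at `0`, a closed
interval `[c, d] ⊆ (0, 1)`, and `0 < ε ≤ min {c, 1−d, d−c}/10`, with positive probability
there is an `N₀` such that for all `n ≥ N₀` one has `c ≤ 2 Z(n,1)/n ≤ d`,
`Z(n,2) < n^{1−ε}` and `Z(n,−2) < n^{1−ε}`. -/
theorem vrrw_five_points_good_event
    {Ω : Type*} {mΩ : MeasurableSpace Ω} (μ : Measure Ω) [IsProbabilityMeasure μ]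
    (ℱ : Filtration ℕ mΩ) (X : ℕ → Ω → ℤ)
    (hX : IsVRRWOn μ ℱ (Set.Icc (-2) 2) 0 X)
    (c d ε : ℝ) (hc : 0 < c) (hcd : c ≤ d) (hd : d < 1)
    (hε : 0 < ε) (hε' : ε ≤ min (min c (1 - d)) (d - c) / 10) :
    0 < μ {ω | ∃ N₀ : ℕ, ∀ n ≥ N₀,
      (c ≤ 2 * occ X n 1 ω / (n : ℝ) ∧ 2 * occ X n 1 ω / (n : ℝ) ≤ d) ∧
      occ X n 2 ω < (n : ℝ) ^ (1 - ε) ∧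
      occ X n (-2) ω < (n : ℝ) ^ (1 - ε)} := by
  have hm1 : min (min c (1 - d)) (d - c) ≤ c := (min_le_left _ _).trans (min_le_left _ _)
  have hm2 : min (min c (1 - d)) (d - c) ≤ 1 - d := (min_le_left _ _).trans (min_le_right _ _)
  have hm3 : min (min c (1 - d)) (d - c) ≤ d - c := min_le_right _ _
  have hlt : c < d := by linarith
  obtain ⟨P, hPq, hPB, hPθ⟩ : ∃ P : PotParams, P.q = (c + d) / 2 ∧
      P.B = 1 / ((d - c) / 4) ^ 2 ∧ P.θ = 1 - 2 * ε :=
    ⟨PotParams.ofInterval c d ε hc hlt hd hε (by linarith) (by linarith), rfl, rfl, rfl⟩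
  -- Where the capped potential is eventually below `1`, the three bounds hold eventually.
  have hgood : ∀ ω, (∀ n, |X (n + 1) ω - X n ω| = 1) →
      (∀ᶠ n in atTop, P.cap (X n ω) (fun w => occ X n w ω) < 1) → ∃ N₀ : ℕ, ∀ n ≥ N₀,
      (c ≤ 2 * occ X n 1 ω / (n : ℝ) ∧ 2 * occ X n 1 ω / (n : ℝ) ≤ d) ∧
      occ X n 2 ω < (n : ℝ) ^ (1 - ε) ∧ occ X n (-2) ω < (n : ℝ) ^ (1 - ε) := by
    intro ω hω hev
    have hbig : ∀ᶠ n : ℕ in atTop, (5 : ℝ) / ((d - c) / 4) + 5 ≤ n :=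
      tendsto_natCast_atTop_atTop.eventually_ge_atTop _
    rw [← eventually_atTop]
    filter_upwards [hev, hbig] with n hn hbn
    have hδ : 0 < (d - c) / 4 := by linarith
    have hn5 : (5 : ℝ) ≤ n := le_trans (by have : 0 ≤ 5 / ((d - c) / 4) := by positivity
                                           linarith) hbn
    have hnδ : 5 ≤ (d - c) / 4 * n := by
      have h : 5 / ((d - c) / 4) ≤ n := by linarith
      rwa [div_le_iff₀ hδ, mul_comm] at h
    obtain ⟨hT1, hT2⟩ := hX.clock_bounds hω n
    have o1 := occ_one_le X n 1 ω
    have o2 := occ_one_le X n 2 ω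
    have o3 := occ_one_le X n (-1) ω
    have o4 := occ_one_le X n (-2) ω
    have hpot : P.pot (X n ω) (fun w => occ X n w ω) < 1 := by
      rcases min_lt_iff.1 hn with h | h
      · exact h
      · exact absurd h (lt_irrefl _)
    obtain ⟨hr, hs, -⟩ := P.core_lt_one (by linarith) (by linarith)
      (P.hold_nonneg fun w => zero_le_one.trans (occ_one_le X n w ω)) hpot
    have hsmall : occ X n 2 ω + occ X n (-2) ω < (n : ℝ) ^ (1 - ε) := by
      calc occ X n 2 ω + occ X n (-2) ω ≤ P.A * (occ X n 2 ω + occ X n (-2) ω) :=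
            le_mul_of_one_le_left (by linarith) P.A_one
        _ < (occ X n 1 ω + occ X n (-1) ω) ^ P.θ := hs
        _ ≤ (n : ℝ) ^ P.θ :=
            Real.rpow_le_rpow (by linarith) (by linarith) P.θ_pos.le
        _ ≤ (n : ℝ) ^ (1 - ε) :=
            Real.rpow_le_rpow_of_exponent_le (by linarith) (by rw [hPθ]; linarith)
    refine ⟨?_, by linarith, by linarith⟩
    rw [hPB, hPq, one_div, inv_mul_lt_iff₀ (by positivity), mul_one] at hr
    have habs := abs_lt_of_sq_lt_sq hr hδ.le
    rw [abs_lt] at habs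
    have hn0 : (0 : ℝ) < n := by linarith
    have hT0 : 0 < occ X n 1 ω + occ X n (-1) ω := by linarith
    have hw : occ X n 1 ω = occ X n 1 ω / (occ X n 1 ω + occ X n (-1) ω) *
        (occ X n 1 ω + occ X n (-1) ω) := by field_simp
    generalize occ X n 1 ω / (occ X n 1 ω + occ X n (-1) ω) = p at *
    generalize occ X n 1 ω + occ X n (-1) ω = T at *
    have hpd : p ≤ d - (d - c) / 4 := by linarith
    have hpc : c ≤ p := by linarith
    rw [le_div_iff₀ hn0, div_le_iff₀ hn0, hw]
    constructor
    · nlinarith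
    · nlinarith
  have hsup := hX.supermartingale_cap P
  have hcap0 : ∀ n ω, 0 ≤ P.cap (X n ω) (fun w => occ X n w ω) := fun n ω =>
    le_min (P.pot_nonneg fun w => zero_le_one.trans (occ_one_le X n w ω)) zero_le_one
  have hcap1 : ∀ n ω, P.cap (X n ω) (fun w => occ X n w ω) ≤ 1 := fun n ω => min_le_right _ _
  have hconv : ∀ᵐ ω ∂μ, ∃ r, Tendsto (fun n => P.cap (X n ω) (fun w => occ X n w ω)) atTop
      (nhds r) := by
    have h := hsup.neg.exists_ae_tendsto_of_bdd (R := 1) (fun n => by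
      refine (eLpNorm_le_of_ae_bound (C := 1) (ae_of_all _ fun ω => ?_)).trans (by simp)
      rw [Pi.neg_apply, Pi.neg_apply, norm_neg, Real.norm_of_nonneg (hcap0 n ω)]
      exact hcap1 n ω)
    filter_upwards [h] with ω ⟨r, hr⟩
    exact ⟨-r, by simpa using hr.neg⟩
  -- If the good event were null, the capped potential would converge to `1` almost surely; on the
  -- starting event `S` its mean would then exceed the initial value `r * μ S` with `r < 1`.
  by_contra hzero
  rw [not_lt, nonpos_iff_eq_zero] at hzero
  have hone : ∀ᵐ ω ∂μ, Tendsto (fun n => P.cap (X n ω) (fun w => occ X n w ω)) atTop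
      (nhds 1) := by
    filter_upwards [hconv, hX.ae_adjacent, measure_eq_zero_iff_ae_notMem.1 hzero]
      with ω ⟨r, hr⟩ hadj hbad
    have hr1 : r ≤ 1 := le_of_tendsto' hr fun n => hcap1 n ω
    rcases hr1.lt_or_eq with h | rfl
    · exact absurd (hgood ω hadj (hr.eventually_lt_const h)) hbad
    · exact hr
  obtain ⟨m, l, hml⟩ := P.exists_start
  have hpos := hX.start_pos m l
  set N := 2 * (m + l)
  set S := {ω | X N ω = 0 ∧ occ X N 1 ω = 1 + m ∧
      occ X N (-1) ω = 1 + l ∧ occ X N 2 ω = 1 ∧ occ X N (-2) ω = 1} with hSdef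
  have hSm : MeasurableSet[ℱ N] S := by
    have ho : ∀ w r, MeasurableSet[ℱ N] {ω | occ X N w ω = r} := fun w r =>
      ((measurable_pi_apply w).comp hX.measurable_occ) (measurableSet_singleton r)
    exact MeasurableSet.inter ((hX.measurable_X le_rfl) (measurableSet_singleton 0))
      ((ho _ _).inter ((ho _ _).inter ((ho _ _).inter (ho _ _))))
  set r := P.core (1 + 1) 0 (1 + m) (1 + m + (1 + l)) with hr
  have hstart : ∫ ω in S, P.cap (X N ω) (fun w => occ X N w ω) ∂μ ≤ r * μ.real S := by
    have h : ∀ ω ∈ S, P.cap (X N ω) (fun w => occ X N w ω) ≤ r := by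
      rintro ω ⟨h1, h2, h3, h4, h5⟩
      refine (min_le_left _ _).trans (le_of_eq ?_)
      simp only [PotParams.pot, PotParams.hold, h1, h2, h3, h4, h5, hr]
      norm_num
    calc _ ≤ ∫ _ in S, r ∂μ := setIntegral_mono_on (hsup.integrable N).integrableOn
          (integrable_const _) (ℱ.le N _ hSm) h
      _ = r * μ.real S := by simp [mul_comm]
  have hle : ∀ n ≥ N, ∫ ω in S, P.cap (X n ω) (fun w => occ X n w ω) ∂μ ≤ r * μ.real S :=
    fun n hn => (hsup.setIntegral_le hn hSm).trans hstart
  have hlim : Tendsto (fun n => ∫ ω in S, P.cap (X n ω) (fun w => occ X n w ω) ∂μ) atTop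
      (nhds (∫ _ in S, (1 : ℝ) ∂μ)) := by
    refine tendsto_integral_of_dominated_convergence (fun _ => (1 : ℝ))
      (fun n => (hsup.integrable n).aestronglyMeasurable.restrict) (integrable_const _)
      (fun n => ae_of_all _ fun ω => ?_) (ae_restrict_of_ae hone)
    rw [Real.norm_of_nonneg (hcap0 n ω)]
    exact hcap1 n ω
  have hfin := le_of_tendsto hlim (eventually_atTop.2 ⟨N, hle⟩)
  have hS0 : 0 < μ.real S := ENNReal.toReal_pos hpos.ne' (measure_ne_top _ _)
  have hS1 : ∫ _ in S, (1 : ℝ) ∂μ = μ.real S := by simp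
  rw [hS1] at hfin
  nlinarith
end

section
/- There is a constant δ > 0 such that for every integer m > 0 the following holds. Let X be a VRRW on the half-line J_m = {k ∈ ℤ : k ≤ m+2} started at 0, and let τ_m be the first time the walk reaches site m. Then with probability at least δ, for every n ≥ τ_m both inequalities hold: (i) Z(n, m) ≥ Z(n, m+2)², and (ii) Z(n, m−1) ≥ 2 Z(n, m+1) (the event being interpreted as holding vacuously on {τ_m = ∞}). -/
/-!
Write `b, c, d, e` for the occupation numbers of `m - 1`, `m`, `m + 1`, `m + 2`. The good event has
probability bounded below because of a bounded submartingale `U` that depends on the past only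
through the position and these four numbers, except that it is killed (set to `0`) as soon as one of the
two inequalities fails. It starts at or above a constant `δ`, and it is at most the indicator of
survival up to time `n`, so `δ ≤ E[U 0] ≤ E[U n] ≤ P(survival up to time n)`; let `n → ∞`.

The potential behind `U` comes from two observations at visits to `m`.

* The pair `(b, d)` is a Pólya urn with extra `b`-balls (arrivals from the left, harmless) and
  extra `d`-balls (arrivals from `m + 2`). Without the latter, `d / (b + d)` is a martingale at `m`.
* As long as `2 * d ≤ b`, the walk steps from `m` to `m + 1` with probability at most `1 / 3`, so
  `log e` grows at most about a third as fast as `log c`, and `e * (e + 1) / c` is a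
  supermartingale with strictly negative drift of order `e * (e + 1) / c ^ 2`. The `d`-balls
  coming from `m + 2` produce a positive drift of `d / (b + d)` of order at most `e / c ^ 2`, since
  `c ≤ b + d`, and the negative drift absorbs it.

Hence `V = d / (b + d) + 2 * e * (e + 1) / c`, suitably adjusted when the walk is not at `m`, is a
supermartingale for `c ≥ 20`. It is at least `1 / 3` when an inequality fails, and
`1 - 3 * V ≥ 1 / 5` when `c = 20`, `d = e = 1`. For `c < 20` it is enough to insist on moving left
from `m` each time, which has conditional probability at least `1 / 2`. What the walk does left of
`m - 1` plays no role. The pointwise inequality is `val_step`, its integrated form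
`integral_U_le_succ`.
-/

open MeasureTheory Filter Set

/-! ### Drift estimates -/

/-- The weight of `2 * e * (e + 1)` in the potential when the walk is right of `m`. It replaces
the weight `1 / c` used at `m`; it is chosen large enough to absorb both the growth of `e` and the
extra visits to `m + 1` from `m + 2` before the return to `m` (`right_step`), and small enough
for `center_step`. -/
noncomputable def hFun (c : ℝ) : ℝ := (c + 1 / 2) / ((c + 1) * (c - 2))

/-- Drift at `m`: the ratio `d / (b + d)` is an exact martingale (a Pólya urn), and since the right
move has probability at most `1 / 3`, the term `2 * e * (e + 1) / c` has negative drift. -/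
lemma center_step {b c d e : ℝ} (hb : 0 < b) (hd : 1 ≤ d) (he : 1 ≤ e) (hc : 20 ≤ c)
    (hbd : 2 * d ≤ b) :
    1 - 3 * (d / (b + d) + 2 * e * (e + 1) / c) ≤
      b / (b + d) * (1 - 3 * (d / (b + 1 + d) + 2 * e * (e + 1) / (c + 1))) +
      d / (b + d) * (1 - 3 * ((d + 1) / (b + (d + 1)) + 2 * e * (e + 1) * hFun c)) := by
  have hE : 0 ≤ e * (e + 1) := by positivity
  have h1 : b / (b + d) * (d / (b + 1 + d)) + d / (b + d) * ((d + 1) / (b + (d + 1)))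
      = d / (b + d) := by
    have h2 : b + d ≠ 0 := by positivity
    have h3 : b + 1 + d ≠ 0 := by positivity
    have h4 : b + (d + 1) = b + 1 + d := by ring
    rw [h4]; field_simp; ring
  set p := d / (b + d) with hp
  have hq : b / (b + d) = 1 - p := by rw [hp]; field_simp; ring
  have hp3 : p ≤ 1 / 3 := by
    rw [hp, div_le_div_iff₀ (by positivity) (by norm_num)]; linarith
  have hp0 : 0 ≤ p := by positivity
  have key : (1 - p) / (c + 1) + p * hFun c ≤ 1 / c := by
    have h2 : c - 2 > 0 := by linarith
    have : 1 / c - ((1 - p) / (c + 1) + p * hFun c)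
        = (c - 2 - 5 / 2 * p * c) / (c * ((c + 1) * (c - 2))) := by
      unfold hFun; field_simp; ring
    have h3 : 0 ≤ (c - 2 - 5 / 2 * p * c) / (c * ((c + 1) * (c - 2))) := by
      apply div_nonneg
      · nlinarith
      · positivity
    linarith
  have key2 := mul_le_mul_of_nonneg_left key hE
  rw [hq] at h1 ⊢
  have e1 : 2 * e * (e + 1) / c = 2 * (e * (e + 1) * (1 / c)) := by ring
  have e2 : 2 * e * (e + 1) / (c + 1) = 2 * (e * (e + 1) * (1 / (c + 1))) := by ring
  have e3 : (1 - p) / (c + 1) = (1 - p) * (1 / (c + 1)) := by ring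
  rw [e1, e2]; rw [e3] at key2
  linear_combination 3 * h1 + 6 * key2

/-- Drift at `m + 1`. An excursion to `m + 2` costs at most `1 / c` in `d / (b + d)`, because
`c ≤ b + d`; the choice of `hFun` pays for it. -/
lemma right_step {b c d e : ℝ} (hb : 1 ≤ b) (hd : 1 ≤ d) (he : 1 ≤ e) (hc : 20 ≤ c)
    (hbd : c ≤ b + d) :
    1 - 3 * (d / (b + d) + 2 * e * (e + 1) * hFun c) ≤
      c / (c + e) * (1 - 3 * (d / (b + d) + 2 * e * (e + 1) / (c + 1))) +
      e / (c + e) * (1 - 3 * ((d + 1) / (b + d + 1) + 2 * (e + 1) * (e + 1 + 1) * hFun c)) := by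
  have hc0 : 0 < c := by linarith
  have hD : (d + 1) / (b + d + 1) ≤ d / (b + d) + 1 / c := by
    have : (d + 1) / (b + d + 1) - d / (b + d) ≤ 1 / (b + d) := by
      have : (d + 1) / (b + d + 1) - d / (b + d) = 1 / (b + d) * (b / (b + d + 1)) := by
        field_simp; ring
      rw [this]
      apply mul_le_of_le_one_right (by positivity)
      rw [div_le_one (by positivity)]; linarith
    have : 1 / (b + d) ≤ 1 / c := one_div_le_one_div_of_le hc0 hbd
    linarith
  have h2 : c - 2 > 0 := by linarith
  set v := d / (b + d)
  have hq : c / (c + e) = 1 - e / (c + e) := by field_simp; ring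
  have hp0 : 0 ≤ e / (c + e) := by positivity
  have key : (c / (c + e)) * (2 * e * (e + 1) / (c + 1)) +
      e / (c + e) * (1 / c + 2 * (e + 1) * (e + 1 + 1) * hFun c) ≤
      2 * e * (e + 1) * hFun c := by
    have : 2 * e * (e + 1) * hFun c - ((c / (c + e)) * (2 * e * (e + 1) / (c + 1)) +
      e / (c + e) * (1 / c + 2 * (e + 1) * (e + 1 + 1) * hFun c))
      = e * ((e + 1) * c - (c + 1)) / ((c + e) * (c * (c + 1))) := by
      unfold hFun; field_simp; ring
    have h3 : 0 ≤ e * ((e + 1) * c - (c + 1)) / ((c + e) * (c * (c + 1))) := by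
      apply div_nonneg
      · apply mul_nonneg (by linarith); nlinarith
      · positivity
    linarith
  have := mul_le_mul_of_nonneg_left hD hp0
  rw [hq] at key ⊢
  linear_combination 3 * key + 3 * this

/-! ### The potential and its one-step inequality -/

/-- The potential at `m`. For `c < 20` it is the price of insisting that every move so far from `m`
has been to the left; from `c = 20` on it is an affine decreasing function of the supermartingale
`d / (b + d) + 2 * e * (e + 1) / c`. -/
noncomputable def basePot (c b d e : ℕ) : ℝ :=
  if c < 20 then (if d = 1 ∧ e = 1 then (1 / 2 : ℝ) ^ (20 - c) / 5 else 0)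
  else 1 - 3 * ((d : ℝ) / (b + d) + 2 * e * (e + 1) / c)

/-- The potential of a walker at `x` when the occupation numbers of `m - 1`, `m`, `m + 1`, `m + 2`
are `b`, `c`, `d`, `e`. Left of `m` it is the potential at the next arrival at `m`, with `c + 1`
in place of `c`; at `m + 2` it is the potential after the forced step to `m + 1`. -/
noncomputable def pot (m x : ℤ) (b c d e : ℕ) : ℝ :=
  if x = m then basePot c b d e
  else if x < m then basePot (c + 1) b d e
  else if c < 20 then 0
  else if x = m + 1 then 1 - 3 * ((d : ℝ) / (b + d) + 2 * e * (e + 1) * hFun c)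
  else 1 - 3 * (((d : ℝ) + 1) / (b + d + 1) + 2 * e * (e + 1) * hFun c)

/-- The desired inequalities (field `good`, required once `m` has been visited, i.e. `2 ≤ c`),
together with invariants of nearest-neighbour paths in the half-line started left of `m`. The
balance conditions hold because each visit to `m` comes from, and is followed by, a visit to
`m - 1` or `m + 1`. -/
structure Good (m x : ℤ) (b c d e : ℕ) : Prop where
  hb : 1 ≤ b
  hc : 1 ≤ c
  hd : 1 ≤ d
  he : 1 ≤ e
  le : x ≤ m + 2
  hm : x = m → 2 ≤ c
  bal : c + 1 ≤ b + d
  bal' : x = m - 1 ∨ x = m + 1 → c + 2 ≤ b + d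
  good : 2 ≤ c → e ^ 2 ≤ c ∧ 2 * d ≤ b

open scoped Classical in
/-- The truncated potential, killed at states that are not good. -/
noncomputable def val (m x : ℤ) (b c d e : ℕ) : ℝ :=
  if Good m x b c d e then max 0 (pot m x b c d e) else 0

/-- The value of `val` after a move to `y`, with the occupation number of `y` increased by one. -/
noncomputable def nextVal (m : ℤ) (b c d e : ℕ) (y : ℤ) : ℝ :=
  val m y (b + if y = m - 1 then 1 else 0) (c + if y = m then 1 else 0)
    (d + if y = m + 1 then 1 else 0) (e + if y = m + 2 then 1 else 0)

lemma hFun_nonneg {c : ℝ} (hc : 20 ≤ c) : 0 ≤ hFun c := by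
  have : 0 < c - 2 := by linarith
  unfold hFun; positivity

lemma basePot_le_one (c b d e : ℕ) : basePot c b d e ≤ 1 := by
  unfold basePot
  split_ifs
  · have : (1 / 2 : ℝ) ^ (20 - c) ≤ 1 := pow_le_one₀ (by norm_num) (by norm_num)
    linarith
  · norm_num
  · have : 0 ≤ (d : ℝ) / (b + d) + 2 * e * (e + 1) / c := by positivity
    linarith

lemma pot_le_one (m x : ℤ) (b c d e : ℕ) : pot m x b c d e ≤ 1 := by
  unfold pot
  split_ifs with h1 h2 h3
  · exact basePot_le_one ..
  · exact basePot_le_one ..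
  · norm_num
  · have := hFun_nonneg (c := c) (by exact_mod_cast not_lt.1 h3)
    have : 0 ≤ (d : ℝ) / (b + d) + 2 * e * (e + 1) * hFun c := by positivity
    linarith
  · have := hFun_nonneg (c := c) (by exact_mod_cast not_lt.1 h3)
    have : 0 ≤ ((d : ℝ) + 1) / (b + d + 1) + 2 * e * (e + 1) * hFun c := by positivity
    linarith

lemma val_nonneg (m x : ℤ) (b c d e : ℕ) : 0 ≤ val m x b c d e := by
  unfold val; split_ifs <;> simp

lemma val_le_one (m x : ℤ) (b c d e : ℕ) : val m x b c d e ≤ 1 := by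
  unfold val; split_ifs
  · exact max_le zero_le_one (pot_le_one ..)
  · exact zero_le_one

lemma pot_le_val {m x : ℤ} {b c d e : ℕ} (h : ¬ Good m x b c d e → pot m x b c d e ≤ 0) :
    pot m x b c d e ≤ val m x b c d e := by
  unfold val; split_ifs with h1
  · exact le_max_right _ _
  · exact h h1

lemma basePot_mono_b {c b b' d e : ℕ} (hd : 1 ≤ d) (hb : b ≤ b') :
    basePot c b d e ≤ basePot c b' d e := by
  unfold basePot
  split_ifs
  · rfl
  · rfl
  · have hd : (1 : ℝ) ≤ d := by exact_mod_cast hd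
    have hb : (b : ℝ) ≤ b' := by exact_mod_cast hb
    have : (d : ℝ) / (b' + d) ≤ d / (b + d) := by gcongr
    linarith

/-- If the inequality `2 * d ≤ b` fails, then this term alone makes the potential nonpositive. -/
lemma third_le_ratio {b d : ℝ} (hb : 0 ≤ b) (hd : 0 < d) (h : b < 2 * d) :
    1 / 3 ≤ d / (b + d) := by
  rw [div_le_div_iff₀ (by norm_num) (by positivity)]; linarith

/-- If `c ≤ e ^ 2`, then this term alone makes the potential nonpositive. -/
lemma third_le_sq {c e : ℝ} (hc : 20 ≤ c) (he : 1 ≤ e) (h : c ≤ e ^ 2) :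
    1 / 3 ≤ 2 * e * (e + 1) * hFun c := by
  have h2 : 0 < c - 2 := by linarith
  have h3 : 1 ≤ c * hFun c := by
    unfold hFun
    rw [← mul_div_assoc, le_div_iff₀ (by positivity)]
    nlinarith
  have h4 := hFun_nonneg hc
  have h5 : c * hFun c ≤ e * (e + 1) * hFun c := by
    apply mul_le_mul_of_nonneg_right _ h4
    nlinarith
  linarith

lemma le_convex {l r a p q : ℝ} (hl : 0 < l) (hr : 0 ≤ r) (hp : a ≤ p) (hq : a ≤ q) :
    a ≤ l / (l + r) * p + r / (l + r) * q := by
  have h1 : l / (l + r) + r / (l + r) = 1 := by field_simp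
  have h2 : 0 ≤ l / (l + r) := by positivity
  have h3 : 0 ≤ r / (l + r) := by positivity
  calc a = l / (l + r) * a + r / (l + r) * a := by rw [← add_mul, h1, one_mul]
    _ ≤ _ := by gcongr

lemma step_left {m x : ℤ} {b c d e : ℕ} (hG : Good m x b c d e) (hx : x < m)
    (hpos : 0 < pot m x b c d e) (y : ℤ) (hy : y = x - 1 ∨ y = x + 1) :
    pot m x b c d e ≤ nextVal m b c d e y := by
  obtain ⟨hb, hc, hd, he, hle, hm, bal, bal', good⟩ := hG
  have hyle : y ≤ m := by omega
  have e1 : y ≠ m + 1 := by omega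
  have e2 : y ≠ m + 2 := by omega
  unfold nextVal
  rw [if_neg e1, if_neg e2, add_zero, add_zero]
  have hpx : pot m x b c d e = basePot (c + 1) b d e := by
    unfold pot; rw [if_neg (by omega), if_pos hx]
  refine le_trans ?_ (pot_le_val ?_)
  · rw [hpx]
    rcases hyle.lt_or_eq with h | h
    · unfold pot
      rw [if_neg (by omega), if_pos h, if_neg (by omega : ¬ y = m)]
      exact basePot_mono_b hd (by omega)
    · unfold pot
      rw [if_pos h, if_pos h]
      exact basePot_mono_b hd (by omega)
  · intro hn
    exfalso
    apply hn
    by_cases hc2 : 2 ≤ c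
    · obtain ⟨g1, g2⟩ := good hc2
      constructor <;> (try split_ifs) <;> (try omega)
    · have hc1 : c = 1 := by omega
      subst hc1
      have : d = 1 ∧ e = 1 := by
        by_contra h
        rw [hpx] at hpos
        unfold basePot at hpos
        rw [if_pos (by norm_num), if_neg h] at hpos
        exact lt_irrefl _ hpos
      obtain ⟨rfl, rfl⟩ := this
      constructor <;> (try split_ifs) <;> (try omega)

lemma step_center {m : ℤ} {b c d e : ℕ} (hG : Good m m b c d e)
    (hpos : 0 < pot m m b c d e) :
    pot m m b c d e ≤ (b : ℝ) / (b + d) * nextVal m b c d e (m - 1) +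
      (d : ℝ) / (b + d) * nextVal m b c d e (m + 1) := by
  obtain ⟨hb, hc, hd, he, hle, hm, bal, bal', good⟩ := hG
  have hc2 := hm rfl
  obtain ⟨g1, g2⟩ := good hc2
  have hb' : (1 : ℝ) ≤ b := by exact_mod_cast hb
  have hd' : (1 : ℝ) ≤ d := by exact_mod_cast hd
  have he' : (1 : ℝ) ≤ e := by exact_mod_cast he
  have g2' : 2 * (d : ℝ) ≤ b := by exact_mod_cast g2
  have hL : pot m (m - 1) (b + 1) c d e ≤ nextVal m b c d e (m - 1) := by
    unfold nextVal
    simp only [show m - 1 ≠ m by omega, show m - 1 ≠ m + 1 by omega,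
      show m - 1 ≠ m + 2 by omega, if_true, if_false, add_zero]
    apply pot_le_val
    intro hn
    exfalso
    apply hn
    constructor <;> omega
  have hLe : pot m (m - 1) (b + 1) c d e = basePot (c + 1) (b + 1) d e := by
    unfold pot; rw [if_neg (by omega), if_pos (by omega)]
  have hpm : pot m m b c d e = basePot c b d e := by
    unfold pot; rw [if_pos rfl]
  by_cases h20 : c < 20
  · have hR : 0 ≤ nextVal m b c d e (m + 1) := val_nonneg ..
    have hhalf : (1 / 2 : ℝ) ≤ b / (b + d) := by
      rw [div_le_div_iff₀ (by norm_num) (by positivity)]; linarith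
    have hde : d = 1 ∧ e = 1 := by
      by_contra h
      rw [hpm] at hpos
      unfold basePot at hpos
      rw [if_pos h20, if_neg h] at hpos
      exact lt_irrefl _ hpos
    have hmain : pot m m b c d e ≤ 1 / 2 * basePot (c + 1) (b + 1) d e := by
      rw [hpm]
      unfold basePot
      rw [if_pos h20, if_pos hde]
      by_cases h19 : c + 1 < 20
      · rw [if_pos h19, if_pos hde, show 20 - c = (20 - (c + 1)) + 1 by omega, pow_succ]
        apply le_of_eq; ring
      · rw [if_neg h19]
        obtain ⟨rfl, rfl⟩ := hde
        obtain rfl : c = 19 := by omega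
        have hb19 : (19 : ℝ) ≤ b := by
          have : 19 ≤ b := by omega
          exact_mod_cast this
        have : (1 : ℝ) / (b + 1 + 1) ≤ 1 / 21 :=
          one_div_le_one_div_of_le (by norm_num) (by linarith)
        push_cast
        norm_num at this ⊢
        linarith
    have hn : 0 ≤ nextVal m b c d e (m - 1) := val_nonneg ..
    have h1 : (1 / 2 : ℝ) * nextVal m b c d e (m - 1) ≤
        b / (b + d) * nextVal m b c d e (m - 1) := mul_le_mul_of_nonneg_right hhalf hn
    have h2 : 0 ≤ (d : ℝ) / (b + d) * nextVal m b c d e (m + 1) := by positivity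
    linarith
  · have hc20 : (20 : ℝ) ≤ c := by exact_mod_cast not_lt.1 h20
    have hR : pot m (m + 1) b c (d + 1) e ≤ nextVal m b c d e (m + 1) := by
      unfold nextVal
      simp only [show m + 1 ≠ m by omega, show m + 1 ≠ m - 1 by omega,
        show m + 1 ≠ m + 2 by omega, if_true, if_false, add_zero]
      apply pot_le_val
      intro hn
      by_cases hbd : 2 * (d + 1) ≤ b
      · exfalso
        apply hn
        constructor <;> omega
      · unfold pot
        rw [if_neg (by omega), if_neg (by omega), if_neg h20, if_pos rfl]
        have := third_le_ratio (b := b) (d := ((d + 1 : ℕ) : ℝ)) (by positivity)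
          (by positivity) (by exact_mod_cast not_le.1 hbd)
        have hh := hFun_nonneg hc20
        have : 0 ≤ 2 * (e : ℝ) * (e + 1) * hFun c := by positivity
        linarith
    have hcs := center_step (b := b) (c := c) (d := d) (e := e) (by linarith) hd' he' hc20 g2'
    have hR' : pot m (m + 1) b c (d + 1) e =
        1 - 3 * (((d : ℝ) + 1) / (b + (d + 1)) + 2 * e * (e + 1) * hFun c) := by
      unfold pot
      rw [if_neg (by omega), if_neg (by omega), if_neg h20, if_pos rfl]
      push_cast; rfl
    have hL' : pot m (m - 1) (b + 1) c d e =
        1 - 3 * ((d : ℝ) / (b + 1 + d) + 2 * e * (e + 1) / (c + 1)) := by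
      rw [hLe]; unfold basePot
      rw [if_neg (by omega)]
      push_cast; rfl
    rw [hpm]
    unfold basePot
    rw [if_neg h20]
    rw [← hR', ← hL'] at hcs
    refine hcs.trans ?_
    gcongr

lemma step_right {m : ℤ} {b c d e : ℕ} (hG : Good m (m + 1) b c d e)
    (hpos : 0 < pot m (m + 1) b c d e) :
    pot m (m + 1) b c d e ≤ (c : ℝ) / (c + e) * nextVal m b c d e m +
      (e : ℝ) / (c + e) * nextVal m b c d e (m + 2) := by
  obtain ⟨hb, hc, hd, he, hle, hm, bal, bal', good⟩ := hG
  have h20 : ¬ c < 20 := by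
    intro h
    unfold pot at hpos
    rw [if_neg (by omega), if_neg (by omega), if_pos h] at hpos
    exact lt_irrefl _ hpos
  obtain ⟨g1, g2⟩ := good (by omega)
  have hb' : (1 : ℝ) ≤ b := by exact_mod_cast hb
  have hd' : (1 : ℝ) ≤ d := by exact_mod_cast hd
  have he' : (1 : ℝ) ≤ e := by exact_mod_cast he
  have hc20 : (20 : ℝ) ≤ c := by exact_mod_cast not_lt.1 h20
  have hbal : (c : ℝ) ≤ b + d := by exact_mod_cast (by omega : c ≤ b + d)
  have hL : pot m m b (c + 1) d e ≤ nextVal m b c d e m := by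
    unfold nextVal
    simp only [show m ≠ m - 1 by omega, show m ≠ m + 1 by omega,
      show m ≠ m + 2 by omega, if_true, if_false, add_zero]
    apply pot_le_val
    intro hn
    exfalso
    apply hn
    constructor <;> omega
  have hR : pot m (m + 2) b c d (e + 1) ≤ nextVal m b c d e (m + 2) := by
    unfold nextVal
    simp only [show m + 2 ≠ m by omega, show m + 2 ≠ m - 1 by omega,
      show m + 2 ≠ m + 1 by omega, if_true, if_false, add_zero]
    apply pot_le_val
    intro hn
    by_cases hee : (e + 1) ^ 2 ≤ c
    · exfalso
      apply hn
      constructor <;> omega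
    · unfold pot
      rw [if_neg (by omega), if_neg (by omega), if_neg h20, if_neg (by omega)]
      have h1 := third_le_sq (c := c) (e := ((e + 1 : ℕ) : ℝ)) hc20 (by push_cast; linarith)
        (by exact_mod_cast (not_le.1 hee).le)
      have : 0 ≤ ((d : ℝ) + 1) / (b + d + 1) := by positivity
      linarith
  have hrs := right_step (b := b) (c := c) (d := d) (e := e) hb' hd' he' hc20 hbal
  have hR' : pot m (m + 2) b c d (e + 1) =
      1 - 3 * (((d : ℝ) + 1) / (b + d + 1) + 2 * (e + 1) * (e + 1 + 1) * hFun c) := by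
    unfold pot
    rw [if_neg (by omega), if_neg (by omega), if_neg h20, if_neg (by omega)]
    push_cast; rfl
  have hL' : pot m m b (c + 1) d e =
      1 - 3 * ((d : ℝ) / (b + d) + 2 * e * (e + 1) / (c + 1)) := by
    unfold pot basePot
    rw [if_pos rfl, if_neg (by omega)]
    push_cast; rfl
  have hM : pot m (m + 1) b c d e =
      1 - 3 * ((d : ℝ) / (b + d) + 2 * e * (e + 1) * hFun c) := by
    unfold pot
    rw [if_neg (by omega), if_neg (by omega), if_neg h20, if_pos rfl]
  rw [← hR', ← hL', ← hM] at hrs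
  refine hrs.trans ?_
  gcongr

lemma step_end {m : ℤ} {b c d e : ℕ} (hG : Good m (m + 2) b c d e)
    (hpos : 0 < pot m (m + 2) b c d e) :
    pot m (m + 2) b c d e ≤ nextVal m b c d e (m + 1) := by
  obtain ⟨hb, hc, hd, he, hle, hm, bal, bal', good⟩ := hG
  have h20 : ¬ c < 20 := by
    intro h
    unfold pot at hpos
    rw [if_neg (by omega), if_neg (by omega), if_pos h] at hpos
    exact lt_irrefl _ hpos
  obtain ⟨g1, g2⟩ := good (by omega)
  have hc20 : (20 : ℝ) ≤ c := by exact_mod_cast not_lt.1 h20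
  have hM : pot m (m + 2) b c d e = pot m (m + 1) b c (d + 1) e := by
    unfold pot
    rw [if_neg (by omega), if_neg (by omega), if_neg h20, if_neg (by omega),
      if_neg (by omega), if_neg (by omega), if_neg h20, if_pos rfl]
    push_cast
    rw [add_assoc (b : ℝ)]
  rw [hM] at hpos ⊢
  unfold nextVal
  simp only [show m + 1 ≠ m by omega, show m + 1 ≠ m - 1 by omega,
    show m + 1 ≠ m + 2 by omega, if_true, if_false, add_zero]
  apply pot_le_val
  intro hn
  by_cases hbd : 2 * (d + 1) ≤ b
  · exfalso
    apply hn
    constructor <;> omega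
  · unfold pot
    rw [if_neg (by omega), if_neg (by omega), if_neg h20, if_pos rfl]
    have := third_le_ratio (b := b) (d := ((d + 1 : ℕ) : ℝ)) (by positivity)
      (by positivity) (by exact_mod_cast not_le.1 hbd)
    have hh := hFun_nonneg hc20
    have : 0 ≤ 2 * (e : ℝ) * (e + 1) * hFun c := by positivity
    linarith

/-- The one-step submartingale inequality: `l` and `r` are the weights of the left and the right
neighbour of `x`. -/
lemma val_step {m x : ℤ} {b c d e : ℕ} (hG : Good m x b c d e) {l r : ℝ} (hl : 0 < l)
    (hr : 0 ≤ r) (h0 : x = m → l = b ∧ r = d) (h1 : x = m + 1 → l = c ∧ r = e)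
    (h2 : x = m + 2 → r = 0) :
    val m x b c d e ≤ l / (l + r) * nextVal m b c d e (x - 1) +
      r / (l + r) * nextVal m b c d e (x + 1) := by
  have hL : 0 ≤ nextVal m b c d e (x - 1) := val_nonneg ..
  have hR : 0 ≤ nextVal m b c d e (x + 1) := val_nonneg ..
  have hS : 0 ≤ l / (l + r) * nextVal m b c d e (x - 1) +
      r / (l + r) * nextVal m b c d e (x + 1) := by positivity
  have hv : val m x b c d e = max 0 (pot m x b c d e) := by
    unfold val; rw [if_pos hG]
  rw [hv]
  refine max_le hS ?_
  by_cases hpos : 0 < pot m x b c d e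
  swap
  · linarith
  have hle := hG.le
  rcases lt_trichotomy x m with h | h | h
  · exact le_convex hl hr (step_left hG h hpos _ (Or.inl rfl))
      (step_left hG h hpos _ (Or.inr rfl))
  · subst h
    obtain ⟨rfl, rfl⟩ := h0 rfl
    exact step_center hG hpos
  · rcases (by omega : x = m + 1 ∨ x = m + 2) with rfl | rfl
    · obtain ⟨rfl, rfl⟩ := h1 rfl
      rw [add_sub_cancel_right, add_assoc]
      exact step_right hG hpos
    · rw [h2 rfl]
      have := step_end hG hpos
      rw [show m + 2 - 1 = m + 1 by ring]
      simpa [hl.ne'] using this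

/-! ### The potential along a path -/

/-- The augmented occupation number of `w` along a deterministic path `h`. -/
def cnt (h : ℕ → ℤ) (n : ℕ) (w : ℤ) : ℕ :=
  1 + ((Finset.range (n + 1)).filter (fun i => h i = w)).card

lemma occ_eq_cnt {Ω : Type*} (X : ℕ → Ω → ℤ) (n : ℕ) (w : ℤ) (ω : Ω) :
    occ X n w ω = cnt (fun i => X i ω) n w := by
  unfold occ cnt; push_cast; rfl

lemma one_le_cnt (h : ℕ → ℤ) (n : ℕ) (w : ℤ) : 1 ≤ cnt h n w := by
  unfold cnt; omega

lemma cnt_succ (h : ℕ → ℤ) (n : ℕ) (w : ℤ) :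
    cnt h (n + 1) w = cnt h n w + if h (n + 1) = w then 1 else 0 := by
  unfold cnt
  rw [Finset.range_add_one (n := n + 1), Finset.filter_insert]
  split_ifs with hw
  · rw [Finset.card_insert_of_notMem (by simp)]; omega
  · omega

lemma cnt_congr {h h' : ℕ → ℤ} {n : ℕ} (hh : ∀ k ≤ n, h k = h' k) (w : ℤ) :
    cnt h n w = cnt h' n w := by
  unfold cnt
  congr 2
  apply Finset.filter_congr
  intro i hi
  rw [hh i (by simpa [Nat.lt_succ_iff] using hi)]

/-- The path `h` is in a good state at time `n`. -/
def GoodAt (m : ℤ) (h : ℕ → ℤ) (n : ℕ) : Prop :=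
  Good m (h n) (cnt h n (m - 1)) (cnt h n m) (cnt h n (m + 1)) (cnt h n (m + 2))

lemma GoodAt_congr {m : ℤ} {h h' : ℕ → ℤ} {n : ℕ} (hh : ∀ k ≤ n, h k = h' k) :
    GoodAt m h n ↔ GoodAt m h' n := by
  unfold GoodAt
  rw [hh n le_rfl, cnt_congr hh, cnt_congr hh, cnt_congr hh, cnt_congr hh]

open scoped Classical in
/-- The submartingale, as a function of the path: the truncated potential, killed at the first time
the path is not good. -/
noncomputable def U (m : ℤ) (n : ℕ) (h : ℕ → ℤ) : ℝ :=
  if ∀ k < n, GoodAt m h k then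
    val m (h n) (cnt h n (m - 1)) (cnt h n m) (cnt h n (m + 1)) (cnt h n (m + 2)) else 0

lemma U_congr {m : ℤ} {h h' : ℕ → ℤ} {n : ℕ} (hh : ∀ k ≤ n, h k = h' k) :
    U m n h = U m n h' := by
  have : (∀ k < n, GoodAt m h k) ↔ (∀ k < n, GoodAt m h' k) :=
    forall₂_congr fun k hk => GoodAt_congr fun j hj => hh j (by omega)
  unfold U
  by_cases hp : ∀ k < n, GoodAt m h k
  · rw [if_pos hp, if_pos (this.1 hp), hh n le_rfl, cnt_congr hh, cnt_congr hh, cnt_congr hh,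
      cnt_congr hh]
  · rw [if_neg hp, if_neg (mt this.2 hp)]

lemma U_nonneg (m : ℤ) (n : ℕ) (h : ℕ → ℤ) : 0 ≤ U m n h := by
  unfold U; split_ifs
  · exact val_nonneg ..
  · rfl

lemma U_le_one (m : ℤ) (n : ℕ) (h : ℕ → ℤ) : U m n h ≤ 1 := by
  unfold U; split_ifs
  · exact val_le_one ..
  · exact zero_le_one

lemma U_eq_zero {m : ℤ} {n : ℕ} {h : ℕ → ℤ} (hn : ¬ ∀ k ≤ n, GoodAt m h k) : U m n h = 0 := by
  unfold U
  split_ifs with h1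
  · unfold val
    rw [if_neg]
    intro hG
    apply hn
    intro k hk
    rcases hk.lt_or_eq with h2 | rfl
    · exact h1 k h2
    · exact hG
  · rfl

/-- The path that follows `h` up to time `n` and then moves by `s`. -/
def extendPath (h : ℕ → ℤ) (n : ℕ) (s : ℤ) : ℕ → ℤ := fun k => if k < n + 1 then h k else h n + s

lemma U_ext {m : ℤ} {n : ℕ} {h : ℕ → ℤ} (hg : ∀ k ≤ n, GoodAt m h k) (s : ℤ) :
    U m (n + 1) (extendPath h n s) =
      nextVal m (cnt h n (m - 1)) (cnt h n m) (cnt h n (m + 1)) (cnt h n (m + 2)) (h n + s) := by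
  have hh : ∀ k ≤ n, extendPath h n s k = h k := fun k hk => if_pos (by omega)
  have hl : extendPath h n s (n + 1) = h n + s := if_neg (by omega)
  unfold U nextVal
  rw [if_pos]
  · simp only [cnt_succ, hl, cnt_congr hh]
  · intro k hk
    exact (GoodAt_congr fun j hj => hh j (by omega)).2 (hg k (by omega))

open scoped Classical in
lemma U_step {m : ℤ} {n : ℕ} {h : ℕ → ℤ} {l r : ℝ} (hl : l = cnt h n (h n - 1))
    (hr : r = if h n + 1 ∈ Set.Iic (m + 2) then (cnt h n (h n + 1) : ℝ) else 0) :
    U m n h ≤ l / (l + r) * U m (n + 1) (extendPath h n (-1)) +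
      r / (l + r) * U m (n + 1) (extendPath h n 1) := by
  have hl0 : 0 < l := by
    rw [hl]; exact_mod_cast one_le_cnt h n _
  have hr0 : 0 ≤ r := by
    rw [hr]; split_ifs <;> positivity
  by_cases hg : ∀ k ≤ n, GoodAt m h k
  · rw [U_ext hg, U_ext hg]
    have : U m n h = val m (h n) (cnt h n (m - 1)) (cnt h n m) (cnt h n (m + 1))
        (cnt h n (m + 2)) := if_pos fun k hk => hg k hk.le
    rw [this]
    refine val_step (hg n le_rfl) hl0 hr0 ?_ ?_ ?_
    · intro hx
      rw [hl, hr, if_pos (by simp [hx]), hx]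
      exact ⟨rfl, rfl⟩
    · intro hx
      rw [hl, hr, if_pos (by simp [hx, add_assoc]), hx, add_sub_cancel_right, add_assoc]
      exact ⟨rfl, rfl⟩
    · intro hx
      rw [hr, if_neg (by simp [hx])]
  · rw [U_eq_zero hg]
    have := U_nonneg m (n + 1) (extendPath h n (-1))
    have := U_nonneg m (n + 1) (extendPath h n 1)
    positivity

lemma U_zero {m : ℤ} (hm : 0 < m) {h : ℕ → ℤ} (h0 : h 0 = 0) :
    (1 / 2 : ℝ) ^ 18 / 5 ≤ U m 0 h := by
  have hc : ∀ w, cnt h 0 w = 1 + if w = 0 then 1 else 0 := by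
    intro w
    unfold cnt
    rw [zero_add, Finset.range_one, Finset.filter_singleton, h0]
    by_cases hw : w = 0
    · subst hw; simp
    · rw [if_neg hw, if_neg (Ne.symm hw)]; simp
  have hU : U m 0 h = val m 0 (1 + if m - 1 = 0 then 1 else 0) 1 1 1 := by
    unfold U
    rw [if_pos (by simp), hc, hc, hc, hc, h0, if_neg (by omega : m ≠ 0),
      if_neg (by omega : m + 1 ≠ 0), if_neg (by omega : m + 2 ≠ 0)]
  rw [hU]
  refine le_trans (le_of_eq ?_) (pot_le_val ?_)
  · unfold pot basePot
    rw [if_neg (by omega), if_pos hm, if_pos (by norm_num), if_pos (by simp)]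
  · intro hn
    exfalso
    apply hn
    constructor <;> (try split_ifs) <;> (try omega)

/-! ### Integration over the walk -/

section Prob

variable {Ω : Type*} {mΩ : MeasurableSpace Ω} {μ : Measure Ω} [IsProbabilityMeasure μ]
  {ℱ : Filtration ℕ mΩ} {X : ℕ → Ω → ℤ}

/-- A function of the path up to time `n` is `ℱ n`-measurable, whatever it is: it factors through
the countable discrete space `Fin (n + 1) → ℤ`. -/
lemma measurable_path {α : Type*} [MeasurableSpace α] (hX : Adapted ℱ X) (n : ℕ)
    (F : (ℕ → ℤ) → α)
    (hF : ∀ h h' : ℕ → ℤ, (∀ k ≤ n, h k = h' k) → F h = F h') :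
    Measurable[ℱ n] fun ω => F (fun k => X k ω) := by
  have h1 : Measurable[ℱ n] fun ω => (fun i : Fin (n + 1) => X i ω) := by
    refine @measurable_pi_lambda _ _ _ (ℱ n) _ _ fun i => ?_
    exact (hX i).mono (ℱ.mono (by omega)) le_rfl
  have h2 : Measurable fun t : Fin (n + 1) → ℤ =>
      F (fun k => if hk : k < n + 1 then t ⟨k, hk⟩ else 0) := measurable_of_countable _
  have h3 := h2.comp h1
  convert h3 using 2 with ω
  apply hF
  intro k hk
  simp [hk]

open scoped Classical in
/-- The transition probability of the move by `s` from the current, random, position; obtained from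
the one for fixed targets by localizing on the events `X n = y`. -/
lemma condExp_shift {J : Set ℤ} {v : ℤ} (hX : IsVRRWOn μ ℱ J v X) (n : ℕ) (s : ℤ) :
    μ[fun ω => if X (n + 1) ω = X n ω + s then (1 : ℝ) else 0 | ℱ n] =ᵐ[μ]
      fun ω => if X n ω + s ∈ J ∧ |X n ω + s - X n ω| = 1 then
        occ X n (X n ω + s) ω /
          ((if X n ω - 1 ∈ J then occ X n (X n ω - 1) ω else 0) +
           (if X n ω + 1 ∈ J then occ X n (X n ω + 1) ω else 0)) else 0 := by
  obtain ⟨hA, -, -, hP⟩ := hX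
  have hm : ∀ k, Measurable (X k) := fun k => (hA k).mono (ℱ.le k) le_rfl
  have hi : ∀ Y : Ω → ℤ, Measurable Y →
      Integrable (fun ω => if X (n + 1) ω = Y ω then (1 : ℝ) else 0) μ := by
    intro Y hY
    refine Integrable.of_bound (C := 1) ?_ ?_
    · exact (Measurable.ite (measurableSet_eq_fun (hm _) hY) measurable_const
        measurable_const).aestronglyMeasurable
    · refine ae_of_all _ fun ω => ?_
      split_ifs <;> simp
  have key : ∀ y : ℤ, ∀ᵐ ω ∂μ, X n ω = y →
      (μ[fun ω => if X (n + 1) ω = X n ω + s then (1 : ℝ) else 0 | ℱ n]) ω =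
      (μ[fun ω => if X (n + 1) ω = y + s then (1 : ℝ) else 0 | ℱ n]) ω := by
    intro y
    have hS : MeasurableSet[ℱ n] {ω | X n ω = y} := hA n (measurableSet_singleton y)
    have h1 := condExp_indicator (m := ℱ n) (hi (fun ω => X n ω + s) ((hm n).add_const s)) hS
    have h2 := condExp_indicator (m := ℱ n) (hi (fun _ => y + s) measurable_const) hS
    have h3 : ({ω | X n ω = y}.indicator
        fun ω => if X (n + 1) ω = X n ω + s then (1 : ℝ) else 0) =
        {ω | X n ω = y}.indicator fun ω => if X (n + 1) ω = y + s then (1 : ℝ) else 0 := by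
      ext ω
      by_cases hω : X n ω = y
      · simp [Set.indicator, hω]
      · simp [Set.indicator, hω]
    rw [h3] at h1
    filter_upwards [h1, h2] with ω w1 w2 hω
    have hω' : ω ∈ {ω | X n ω = y} := hω
    rw [w1, Set.indicator_of_mem hω', Set.indicator_of_mem hω'] at w2
    exact w2
  filter_upwards [ae_all_iff.2 key, ae_all_iff.2 (hP n)] with ω h1 h2
  rw [h1 _ rfl, h2]

lemma integral_mul_shift {J : Set ℤ} {v : ℤ} (hX : IsVRRWOn μ ℱ J v X) (n : ℕ) (s : ℤ)
    {f : Ω → ℝ} (hf : Measurable[ℱ n] f) (hb : ∀ ω, ‖f ω‖ ≤ 1) :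
    Integrable (fun ω => f ω * if X (n + 1) ω = X n ω + s then (1 : ℝ) else 0) μ ∧
    Integrable (fun ω => f ω *
      (μ[fun ω => if X (n + 1) ω = X n ω + s then (1 : ℝ) else 0 | ℱ n]) ω) μ ∧
    ∫ ω, f ω * (if X (n + 1) ω = X n ω + s then (1 : ℝ) else 0) ∂μ =
      ∫ ω, f ω * (μ[fun ω => if X (n + 1) ω = X n ω + s then (1 : ℝ) else 0 | ℱ n]) ω ∂μ := by
  have hA := hX.1
  have hm : ∀ k, Measurable (X k) := fun k => (hA k).mono (ℱ.le k) le_rfl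
  have hi : Integrable (fun ω => if X (n + 1) ω = X n ω + s then (1 : ℝ) else 0) μ := by
    refine Integrable.of_bound (C := 1) ?_ ?_
    · exact (Measurable.ite (measurableSet_eq_fun (hm _) ((hm n).add_const s)) measurable_const
        measurable_const).aestronglyMeasurable
    · refine ae_of_all _ fun ω => ?_
      split_ifs <;> simp
  have hfm : AEStronglyMeasurable f μ := (hf.mono (ℱ.le n) le_rfl).aestronglyMeasurable
  have h1 := hi.bdd_mul hfm (ae_of_all _ hb)
  have h2 := (integrable_condExp (m := ℱ n) (μ := μ)
    (f := fun ω => if X (n + 1) ω = X n ω + s then (1 : ℝ) else 0)).bdd_mul hfm (ae_of_all _ hb)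
  refine ⟨h1, h2, ?_⟩
  have h3 := condExp_mul_of_stronglyMeasurable_left (m := ℱ n) hf.stronglyMeasurable h1 hi
  rw [← integral_condExp (ℱ.le n)]
  exact integral_congr_ae h3

lemma integral_U_le_succ {m : ℤ} (hX : IsVRRWOn μ ℱ (Set.Iic (m + 2)) 0 X) (n : ℕ) :
    ∫ ω, U m n (fun k => X k ω) ∂μ ≤ ∫ ω, U m (n + 1) (fun k => X k ω) ∂μ := by
  classical
  have hA := hX.1
  have hmU : ∀ n, Measurable[ℱ n] fun ω => U m n (fun k => X k ω) :=
    fun n => measurable_path hA n _ fun h h' hh => U_congr hh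
  have hiU : ∀ n, Integrable (fun ω => U m n (fun k => X k ω)) μ := fun n =>
    Integrable.of_bound (C := 1) ((hmU n).mono (ℱ.le n) le_rfl).aestronglyMeasurable
      (ae_of_all _ fun ω => by
        rw [Real.norm_of_nonneg (U_nonneg ..)]; exact U_le_one ..)
  have hmE : ∀ s, Measurable[ℱ n] fun ω => U m (n + 1) (extendPath (fun k => X k ω) n s) :=
    fun s => measurable_path hA n (fun h => U m (n + 1) (extendPath h n s)) fun h h' hh =>
      U_congr fun k _ => by
        unfold extendPath
        rw [hh n le_rfl]
        split_ifs with hk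
        · exact hh k (by omega)
        · rfl
  have hbE : ∀ s ω, ‖U m (n + 1) (extendPath (fun k => X k ω) n s)‖ ≤ 1 := fun s ω => by
    rw [Real.norm_of_nonneg (U_nonneg ..)]; exact U_le_one ..
  obtain ⟨l1, l2, l3⟩ := integral_mul_shift hX n (-1) (hmE (-1)) (hbE (-1))
  obtain ⟨r1, r2, r3⟩ := integral_mul_shift hX n 1 (hmE 1) (hbE 1)
  have hJ := hX.2.2.1
  calc ∫ ω, U m n (fun k => X k ω) ∂μ
      ≤ ∫ ω, (U m (n + 1) (extendPath (fun k => X k ω) n (-1)) *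
            (μ[fun ω => if X (n + 1) ω = X n ω + -1 then (1 : ℝ) else 0 | ℱ n]) ω +
          U m (n + 1) (extendPath (fun k => X k ω) n 1) *
            (μ[fun ω => if X (n + 1) ω = X n ω + 1 then (1 : ℝ) else 0 | ℱ n]) ω) ∂μ := by
        refine integral_mono_ae (hiU n) (l2.add r2) ?_
        filter_upwards [condExp_shift hX n (-1), condExp_shift hX n 1] with ω h1 h2
        rw [h1, h2]
        have hx := hJ n ω
        simp only [Set.mem_Iic] at hx
        have hst := U_step (m := m) (n := n) (h := fun k => X k ω) rfl rfl
        have e1 : X n ω + -1 ∈ Set.Iic (m + 2) := by simp only [Set.mem_Iic]; omega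
        have e1' : X n ω - 1 ∈ Set.Iic (m + 2) := by simp only [Set.mem_Iic]; omega
        rw [if_pos ⟨e1, by simp⟩, if_pos e1', ← sub_eq_add_neg]
        simp only [occ_eq_cnt]
        refine hst.trans (le_of_eq ?_)
        by_cases e2 : X n ω + 1 ∈ Set.Iic (m + 2)
        · rw [if_pos e2, if_pos ⟨e2, by simp⟩]
          ring
        · rw [if_neg e2, if_neg (fun h => e2 h.1)]
          ring
    _ = ∫ ω, (U m (n + 1) (extendPath (fun k => X k ω) n (-1)) *
            (if X (n + 1) ω = X n ω + -1 then (1 : ℝ) else 0) +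
          U m (n + 1) (extendPath (fun k => X k ω) n 1) *
            (if X (n + 1) ω = X n ω + 1 then (1 : ℝ) else 0)) ∂μ := by
        rw [integral_add l2 r2, integral_add l1 r1, l3, r3]
    _ ≤ ∫ ω, U m (n + 1) (fun k => X k ω) ∂μ := by
        refine integral_mono (l1.add r1) (hiU (n + 1)) fun ω => ?_
        have hext : ∀ s, X (n + 1) ω = X n ω + s →
            U m (n + 1) (extendPath (fun k => X k ω) n s) = U m (n + 1) (fun k => X k ω) := by
          intro s hs
          refine U_congr fun k hk => ?_
          unfold extendPath
          split_ifs with h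
          · rfl
          · obtain rfl : k = n + 1 := by omega
            exact hs.symm
        have h0 := U_nonneg m (n + 1) (fun k => X k ω)
        by_cases ha : X (n + 1) ω = X n ω + -1
        · have hb : X (n + 1) ω ≠ X n ω + 1 := by omega
          simp only [if_pos ha, if_neg hb, hext _ ha, mul_one, mul_zero, add_zero, le_refl]
        · by_cases hb : X (n + 1) ω = X n ω + 1
          · simp only [if_neg ha, if_pos hb, hext _ hb, mul_one, mul_zero, zero_add, le_refl]
          · simpa only [if_neg ha, if_neg hb, mul_zero, add_zero] using h0

end Prob

/-- **Claim 1 of Lemma (dominates)**: There is a universal constant `δ > 0` such that for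
every integer `m > 0` and every VRRW `X` on the half-line `J_m = {k : k ≤ m+2}` started at
`0`, with probability at least `δ` the following holds for every `n ≥ τ_m` (where `τ_m` is
the first hitting time of `m`, encoded by `∃ i ≤ n, X i = m`; the event holds vacuously
when `m` is never reached): (i) `Z(n, m) ≥ Z(n, m+2)²` and (ii) `Z(n, m−1) ≥ 2 Z(n, m+1)`. -/
theorem vrrw_halfline_good_event_uniform :
    ∃ δ : ℝ, 0 < δ ∧ ∀ m : ℤ, 0 < m →
      ∀ (Ω : Type) (mΩ : MeasurableSpace Ω) (μ : Measure Ω),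
        IsProbabilityMeasure μ →
        ∀ (ℱ : Filtration ℕ mΩ) (X : ℕ → Ω → ℤ),
          IsVRRWOn μ ℱ (Set.Iic (m + 2)) 0 X →
          δ ≤ (μ {ω | ∀ n : ℕ, (∃ i ≤ n, X i ω = m) →
            ((occ X n (m + 2) ω) ^ 2 ≤ occ X n m ω ∧
              2 * occ X n (m + 1) ω ≤ occ X n (m - 1) ω)}).toReal := by
  refine ⟨(1 / 2) ^ 18 / 5, by positivity, ?_⟩
  intro m hm Ω mΩ μ hμ ℱ X hX
  have hA := hX.1
  let S : ℕ → Set Ω := fun n => {ω | ∀ k ≤ n, GoodAt m (fun j => X j ω) k}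
  have hS : ∀ n, MeasurableSet (S n) := by
    intro n
    have h1 : Measurable[ℱ n] fun ω => ∀ k ≤ n, GoodAt m (fun j => X j ω) k :=
      measurable_path hA n (fun h => ∀ k ≤ n, GoodAt m h k) fun h h' hh =>
        propext (forall₂_congr fun k hk => GoodAt_congr fun j hj => hh j (by omega))
    exact measurableSet_setOfPred.2 (h1.mono (ℱ.le n) le_rfl)
  have hanti : Antitone S := fun i j hij ω hω k hk => hω k (hk.trans hij)
  have hint : ∀ n, (1 / 2 : ℝ) ^ 18 / 5 ≤ ∫ ω, U m n (fun k => X k ω) ∂μ := by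
    intro n
    induction n with
    | zero =>
      have hi : Integrable (fun ω => U m 0 (fun k => X k ω)) μ :=
        Integrable.of_bound (C := 1) (((measurable_path hA 0 _ fun h h' hh =>
          U_congr hh).mono (ℱ.le 0) le_rfl).aestronglyMeasurable)
          (ae_of_all _ fun ω => by
            rw [Real.norm_of_nonneg (U_nonneg ..)]; exact U_le_one ..)
      calc (1 / 2 : ℝ) ^ 18 / 5 = ∫ _, (1 / 2 : ℝ) ^ 18 / 5 ∂μ := by simp
        _ ≤ _ := integral_mono (integrable_const _) hi fun ω => U_zero hm (hX.2.1 ω)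
    | succ n ih => exact ih.trans (integral_U_le_succ hX n)
  have hSn : ∀ n, (1 / 2 : ℝ) ^ 18 / 5 ≤ (μ (S n)).toReal := by
    intro n
    refine (hint n).trans ?_
    have : (μ (S n)).toReal = ∫ ω, (S n).indicator (fun _ => (1 : ℝ)) ω ∂μ := by
      rw [integral_indicator (hS n)]; simp [Measure.real]
    rw [this]
    refine integral_mono_of_nonneg (ae_of_all _ fun ω => U_nonneg ..)
      ((integrable_const _).indicator (hS n)) (ae_of_all _ fun ω => ?_)
    by_cases hω : ω ∈ S n
    · simpa only [Set.indicator_of_mem hω] using U_le_one ..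
    · simpa only [Set.indicator_of_notMem hω] using (U_eq_zero hω).le
  have hlim : Tendsto (fun n => (μ (S n)).toReal) atTop (nhds (μ (⋂ n, S n)).toReal) :=
    (ENNReal.tendsto_toReal (measure_ne_top _ _)).comp
      (tendsto_measure_iInter_atTop (fun n => (hS n).nullMeasurableSet) hanti
        ⟨0, measure_ne_top _ _⟩)
  refine (ge_of_tendsto' hlim hSn).trans ?_
  refine ENNReal.toReal_mono (measure_ne_top _ _) (measure_mono ?_)
  rintro ω hω n ⟨i, hi, hXi⟩
  have hG := Set.mem_iInter.1 hω n n le_rfl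
  have hc : 2 ≤ cnt (fun j => X j ω) n m := by
    unfold cnt
    have : 0 < ((Finset.range (n + 1)).filter (fun j => X j ω = m)).card :=
      Finset.card_pos.2 ⟨i, by simp [hXi]; omega⟩
    change 2 ≤ 1 + ((Finset.range (n + 1)).filter (fun j => X j ω = m)).card
    omega
  obtain ⟨g1, g2⟩ := hG.good hc
  simp only [occ_eq_cnt]
  exact ⟨by exact_mod_cast g1, by exact_mod_cast g2⟩
end
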